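/- Let γ be a time optimal trajectory of (Σ) on [a,b] whose control u vanishes almost everywhere on some nondegenerate subinterval (γ contains a singular arc). Then γ is of type B_t S_s B_{t'}: there exist a ≤ c ≤ d ≤ b and constants ε, ε' ∈ {−1,1} such that u = ε a.e. on [a,c], u = 0 a.e. on [c,d], and u = ε' a.e. on [d,b]. Moreover d − c < 2π/cos α, and if c > a or d < b then d − c ≤ π/cos α. -/

import Mathlib

open Real MeasureTheory intervalIntegral Matrix

/-- The drift matrix `f = cos α · ![![0,1,0],![-1,0,0],![0,0,0]]`. -/
noncomputable def fM (α : ℝ) : Matrix (Fin 3) (Fin 3) ℝ :=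
  Real.cos α • !![0,1,0; -1,0,0; 0,0,0]

/-- The controlled matrix `g = sin α · ![![0,0,0],![0,0,1],![0,-1,0]]`. -/
noncomputable def gM (α : ℝ) : Matrix (Fin 3) (Fin 3) ℝ :=
  Real.sin α • !![0,0,0; 0,0,1; 0,-1,0]

/-- An admissible pair for `(Σ)` on `[a,b]`: a measurable control `u : [a,b] → [-1,1]`
together with an absolutely continuous curve `γ : [a,b] → SO(3)` solving
`γ' = γ·(f + u·g)` a.e. (expressed in integral form, entrywise). -/
structure AdmissiblePair (α a b : ℝ) (γ : ℝ → Matrix (Fin 3) (Fin 3) ℝ) (u : ℝ → ℝ) : Prop where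
  hab : a ≤ b
  humeas : Measurable u
  hubound : ∀ t ∈ Set.Icc a b, |u t| ≤ 1
  hso3 : ∀ t ∈ Set.Icc a b, γ t * (γ t).transpose = 1 ∧ (γ t).det = 1
  hcont : ContinuousOn γ (Set.Icc a b)
  hode : ∀ t ∈ Set.Icc a b, ∀ i j,
    γ t i j = γ a i j + ∫ s in a..t, (γ s * (fM α + u s • gM α)) i j

/-- Time optimality for `(Σ)`. -/
def TimeOptimal (α a b : ℝ) (γ : ℝ → Matrix (Fin 3) (Fin 3) ℝ) (u : ℝ → ℝ) : Prop :=
  AdmissiblePair α a b γ u ∧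
  ∀ a' b' γ' u', AdmissiblePair α a' b' γ' u' →
    γ' a' = γ a → γ' b' = γ b → b - a ≤ b' - a'

/-- `t` is a switching time of the control `u : [a,b] → [-1,1]`: in no neighbourhood of `t`
is `u` a.e. equal to a constant `c ∈ {-1,1}`. -/
def IsSwitching (a b : ℝ) (u : ℝ → ℝ) (t : ℝ) : Prop :=
  t ∈ Set.Icc a b ∧ ∀ ε > 0, ¬ ∃ c : ℝ, (c = 1 ∨ c = -1) ∧
    ∀ᵐ s ∂(volume.restrict (Set.Ioo (t - ε) (t + ε) ∩ Set.Icc a b)), u s = c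


/-! ### Rotations -/

/-- membership in `SO(3)` -/
def SOThree (A : Matrix (Fin 3) (Fin 3) ℝ) : Prop := A * A.transpose = 1 ∧ A.det = 1

/-- Rodrigues rotation of angle `θ` about the axis `cos β F + sin β G`. -/
noncomputable def Rm (β θ : ℝ) : Matrix (Fin 3) (Fin 3) ℝ :=
  !![1 - (1 - cos θ) * cos β ^ 2, sin θ * cos β, (1 - cos θ) * cos β * sin β;
     -(sin θ * cos β), cos θ, sin θ * sin β;
     (1 - cos θ) * cos β * sin β, -(sin θ * sin β), 1 - (1 - cos θ) * sin β ^ 2]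

/-- Generator of `Rm β`. -/
noncomputable def Um (β : ℝ) : Matrix (Fin 3) (Fin 3) ℝ :=
  !![0, cos β, 0; -cos β, 0, sin β; 0, -sin β, 0]

lemma SOThree.transpose_mul {A : Matrix (Fin 3) (Fin 3) ℝ} (h : SOThree A) : A.transpose * A = 1 :=
  mul_eq_one_comm.mp h.1

lemma SOThree.mul {A B : Matrix (Fin 3) (Fin 3) ℝ} (hA : SOThree A) (hB : SOThree B) :
    SOThree (A * B) := by
  refine ⟨?_, by rw [det_mul, hA.2, hB.2, one_mul]⟩
  rw [Matrix.transpose_mul, Matrix.mul_assoc, ← Matrix.mul_assoc B, hB.1, Matrix.one_mul, hA.1]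

lemma SOThree.transpose {A : Matrix (Fin 3) (Fin 3) ℝ} (hA : SOThree A) :
    SOThree A.transpose := by
  refine ⟨?_, by rw [det_transpose, hA.2]⟩
  rw [transpose_transpose, hA.transpose_mul]

lemma SOThree.one : SOThree 1 := ⟨by simp, by simp⟩

lemma Rm_SO (β θ : ℝ) : SOThree (Rm β θ) := by
  have h1 := sin_sq_add_cos_sq β
  have h2 := sin_sq_add_cos_sq θ
  have e1 : sin β ^ 2 = 1 - cos β ^ 2 := by linarith
  have e2 : sin θ ^ 2 = 1 - cos θ ^ 2 := by linarith
  have e3 : sin β ^ 3 = (1 - cos β ^ 2) * sin β := by rw [← e1]; ring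
  have e4 : sin β ^ 4 = (1 - cos β ^ 2) ^ 2 := by rw [← e1]; ring
  constructor
  · ext i j
    fin_cases i <;> fin_cases j <;>
      simp [Rm, Matrix.mul_apply, Fin.sum_univ_three, Matrix.transpose_apply, Matrix.vecHead,
        Matrix.vecTail] <;> ring_nf <;> (try simp only [e1, e2, e3, e4]) <;> ring_nf
  · simp [Rm, det_fin_three]
    ring_nf
    simp only [e1, e2, e3, e4]
    ring_nf

lemma Rm_zero (β : ℝ) : Rm β 0 = 1 := by
  ext i j; fin_cases i <;> fin_cases j <;> simp [Rm]

lemma Rm_two_pi_mul (β : ℝ) {θ : ℝ} (h : cos θ = 1) : Rm β θ = 1 := by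
  have : sin θ = 0 := by nlinarith [sin_sq_add_cos_sq θ]
  ext i j; fin_cases i <;> fin_cases j <;> simp [Rm, h, this]

lemma Rm_zero_add (x y : ℝ) : Rm 0 (x + y) = Rm 0 x * Rm 0 y := by
  ext i j; fin_cases i <;> fin_cases j <;>
    simp [Rm, Matrix.mul_apply, Fin.sum_univ_three, cos_add, sin_add] <;> ring

lemma Rm_zero_transpose (x : ℝ) : (Rm 0 x).transpose = Rm 0 (-x) := by
  ext i j; fin_cases i <;> fin_cases j <;>
    simp [Rm, Matrix.transpose_apply]

lemma Rm_pi_comm (β θ : ℝ) : Rm (-β) θ * Rm 0 π = Rm 0 π * Rm β θ := by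
  ext i j; fin_cases i <;> fin_cases j <;>
    simp [Rm, Matrix.mul_apply, Fin.sum_univ_three] <;> ring

lemma Rm_hasDerivAt (β θ : ℝ) (i j : Fin 3) :
    HasDerivAt (fun θ => Rm β θ i j) ((Rm β θ * Um β) i j) θ := by
  have hs := Real.hasDerivAt_sin θ
  have hc := Real.hasDerivAt_cos θ
  have hb := sin_sq_add_cos_sq β
  have e1 : sin β ^ 2 = 1 - cos β ^ 2 := by linarith
  have e3 : sin β ^ 3 = (1 - cos β ^ 2) * sin β := by rw [← e1]; ring
  fin_cases i <;> fin_cases j <;>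
    simp only [Rm, Um, Matrix.mul_apply, Fin.sum_univ_three, Fin.zero_eta, Fin.mk_one,
      Fin.reduceFinMk, Matrix.of_apply, Matrix.cons_val', Matrix.cons_val_zero,
      Matrix.cons_val_one, Matrix.cons_val_fin_one, Matrix.cons_val]
  · refine HasDerivAt.congr_deriv (((hc.const_sub 1).mul_const (cos β ^ 2)).const_sub 1) ?_; ring_nf; (try simp only [e1, e3]); try ring
  · refine HasDerivAt.congr_deriv (hs.mul_const (cos β)) ?_; ring_nf; (try simp only [e1, e3]); try ring
  · refine HasDerivAt.congr_deriv (((hc.const_sub 1).mul_const (cos β)).mul_const (sin β)) ?_; ring_nf; (try simp only [e1, e3]); try ring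
  · refine HasDerivAt.congr_deriv ((hs.mul_const (cos β)).neg) ?_; ring_nf; (try simp only [e1, e3]); try ring
  · refine HasDerivAt.congr_deriv (hc) ?_; ring_nf; (try simp only [e1, e3]); try ring
  · refine HasDerivAt.congr_deriv (hs.mul_const (sin β)) ?_; ring_nf; (try simp only [e1, e3]); try ring
  · refine HasDerivAt.congr_deriv (((hc.const_sub 1).mul_const (cos β)).mul_const (sin β)) ?_; ring_nf; (try simp only [e1, e3]); try ring
  · refine HasDerivAt.congr_deriv ((hs.mul_const (sin β)).neg) ?_; ring_nf; (try simp only [e1, e3]); try ring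
  · refine HasDerivAt.congr_deriv (((hc.const_sub 1).mul_const (sin β ^ 2)).const_sub 1) ?_; ring_nf; (try simp only [e1, e3]); try ring

lemma Rm_continuous (β : ℝ) : Continuous (Rm β) := by
  refine continuous_matrix fun i j => ?_
  exact continuous_iff_continuousAt.mpr fun θ => (Rm_hasDerivAt β θ i j).continuousAt

/-- two special rotations with the same strict upper triangular entries agree -/
lemma SO_eq_of_upper {A B : Matrix (Fin 3) (Fin 3) ℝ} (hA : SOThree A) (hB : SOThree B)
    (A0 : 0 < A 0 0) (B0 : 0 < B 0 0) (A2 : 0 < A 2 2) (B2 : 0 < B 2 2)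
    (h01 : A 0 1 = B 0 1) (h02 : A 0 2 = B 0 2) (h12 : A 1 2 = B 1 2) : A = B := by
  have key : ∀ M : Matrix (Fin 3) (Fin 3) ℝ, SOThree M → 
      M 0 0 ^ 2 + M 0 1 ^ 2 + M 0 2 ^ 2 = 1 ∧ M 0 2 ^ 2 + M 1 2 ^ 2 + M 2 2 ^ 2 = 1 ∧
      M 1 1 = M 0 0 * M 2 2 - M 0 2 * M 2 0 ∧ M 1 0 = - (M 0 1 * M 2 2 - M 0 2 * M 2 1) ∧
      M 2 0 = M 0 1 * M 1 2 - M 0 2 * M 1 1 ∧ M 2 1 = - (M 0 0 * M 1 2 - M 0 2 * M 1 0) := by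
    intro M hM
    have h1 := congrFun (congrFun hM.1 0) 0
    have h2 := congrFun (congrFun hM.transpose_mul 2) 2
    have hadj : M.transpose = M.adjugate := by
      have : M.adjugate * (M * M.transpose) = M.transpose := by
        rw [← Matrix.mul_assoc, adjugate_mul, hM.2]; simp
      rw [← this, hM.1, Matrix.mul_one]
    have c1 := congrFun (congrFun hadj 1) 1
    have c2 := congrFun (congrFun hadj 0) 1
    have c3 := congrFun (congrFun hadj 0) 2
    have c4 := congrFun (congrFun hadj 1) 2
    simp [Matrix.mul_apply, Fin.sum_univ_three, adjugate_fin_three] at h1 h2 c1 c2 c3 c4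
    refine ⟨by linarith, by linarith, by linarith, by linarith, by linarith, by linarith⟩
  obtain ⟨a1, a2, a3, a4, a5, a6⟩ := key A hA
  obtain ⟨b1, b2, b3, b4, b5, b6⟩ := key B hB
  have e00 : A 0 0 = B 0 0 := by
    rw [h01, h02] at a1
    have : A 0 0 ^ 2 = B 0 0 ^ 2 := by linarith
    exact (pow_left_inj₀ A0.le B0.le two_ne_zero).mp this
  have e22 : A 2 2 = B 2 2 := by
    rw [h12, h02] at a2
    have : A 2 2 ^ 2 = B 2 2 ^ 2 := by linarith
    exact (pow_left_inj₀ A2.le B2.le two_ne_zero).mp this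
  have hne : 1 - B 0 2 ^ 2 ≠ 0 := by nlinarith [sq_nonneg (B 0 1)]
  rw [e00, e22, h02] at a3
  rw [h01, e22, h02] at a4
  rw [h01, h12, h02] at a5
  rw [e00, h12, h02] at a6
  have e11 : A 1 1 = B 1 1 := by
    apply mul_right_cancel₀ hne
    rw [a5] at a3; rw [b5] at b3
    linear_combination a3 - b3
  have e10 : A 1 0 = B 1 0 := by
    apply mul_right_cancel₀ hne
    rw [a6] at a4; rw [b6] at b4
    linear_combination a4 - b4
  have e20 : A 2 0 = B 2 0 := by rw [a5, b5, e11]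
  have e21 : A 2 1 = B 2 1 := by rw [a6, b6, e10]
  ext i j
  fin_cases i <;> fin_cases j <;> simp <;> assumption

open Filter Topology

/-- Derivative in `β` of `Rm β θ` at `β = 0`. -/
noncomputable def Rd (θ : ℝ) : Matrix (Fin 3) (Fin 3) ℝ :=
  !![0, 0, 1 - cos θ; 0, 0, sin θ; 1 - cos θ, -sin θ, 0]

lemma Rm_hasStrictDerivAt (θ : ℝ) (i j : Fin 3) :
    HasStrictDerivAt (fun β => Rm β θ i j) (Rd θ i j) 0 := by
  have hs := Real.hasStrictDerivAt_sin 0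
  have hc := Real.hasStrictDerivAt_cos 0
  fin_cases i <;> fin_cases j <;>
    simp only [Rm, Rd, Fin.zero_eta, Fin.mk_one,
      Fin.reduceFinMk, Matrix.of_apply, Matrix.cons_val', Matrix.cons_val_zero,
      Matrix.cons_val_one, Matrix.cons_val_fin_one, Matrix.cons_val]
  · refine HasStrictDerivAt.congr_deriv (((hc.pow 2).const_mul (1 - cos θ)).const_sub 1) ?_; simp
  · refine HasStrictDerivAt.congr_deriv (hc.const_mul (sin θ)) ?_; simp
  · refine HasStrictDerivAt.congr_deriv ((hc.const_mul (1 - cos θ)).mul hs) ?_; simp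
  · refine HasStrictDerivAt.congr_deriv ((hc.const_mul (sin θ)).neg) ?_; simp
  · exact hasStrictDerivAt_const _ _
  · refine HasStrictDerivAt.congr_deriv (hs.const_mul (sin θ)) ?_; simp
  · refine HasStrictDerivAt.congr_deriv ((hc.const_mul (1 - cos θ)).mul hs) ?_; simp
  · refine HasStrictDerivAt.congr_deriv ((hs.const_mul (sin θ)).neg) ?_; simp
  · refine HasStrictDerivAt.congr_deriv (((hs.pow 2).const_mul (1 - cos θ)).const_sub 1) ?_; simp

lemma Rm0_hasStrictDerivAt (i j : Fin 3) :
    HasStrictDerivAt (fun τ => Rm 0 τ i j) (Um 0 i j) 0 := by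
  have hs := Real.hasStrictDerivAt_sin 0
  have hc := Real.hasStrictDerivAt_cos 0
  fin_cases i <;> fin_cases j <;>
    simp [Rm, Um] <;> (try exact hasStrictDerivAt_const _ _)
  · simpa using hc
  · simpa using hs
  · exact (hs.neg).congr_deriv (by simp)
  · simpa using hc

lemma strict_mul {E : Type*} [NormedAddCommGroup E] [NormedSpace ℝ E]
    {A B : E → Matrix (Fin 3) (Fin 3) ℝ} {A' B' : Fin 3 → Fin 3 → (E →L[ℝ] ℝ)}
    {x : E} (hA0 : A x = 1) (hB0 : B x = 1)
    (hA : ∀ i j, HasStrictFDerivAt (fun y => A y i j) (A' i j) x)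
    (hB : ∀ i j, HasStrictFDerivAt (fun y => B y i j) (B' i j) x) (i j : Fin 3) :
    HasStrictFDerivAt (fun y => (A y * B y) i j) (A' i j + B' i j) x := by
  have h : HasStrictFDerivAt (fun y => ∑ k, A y i k * B y k j)
      (∑ k, (A x i k • B' k j + B x k j • A' i k)) x :=
    HasStrictFDerivAt.fun_sum fun k _ => (hA i k).mul (hB k j)
  refine (h.congr_fderiv ?_)
  rw [hA0, hB0]
  simp [Finset.sum_add_distrib, Matrix.one_apply, ite_smul, add_comm]

/-- the perturbed singular arc -/
noncomputable def Pm (θ : ℝ) (x : ℝ × ℝ × ℝ) : Matrix (Fin 3) (Fin 3) ℝ :=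
  ((Rm 0 θ).transpose * Rm (x.2.1 - x.1) θ) * (Rm (x.1 + x.2.1) θ * (Rm 0 θ).transpose) *
    Rm 0 x.2.2

lemma Pm_zero (θ : ℝ) : Pm θ 0 = 1 := by
  simp [Pm, Rm_zero, (Rm_SO 0 θ).transpose_mul, (Rm_SO 0 θ).1]

lemma Pm_SO (θ : ℝ) (x) : SOThree (Pm θ x) :=
  ((((Rm_SO _ _).transpose.mul (Rm_SO _ _)).mul
    ((Rm_SO _ _).mul (Rm_SO _ _).transpose)).mul (Rm_SO _ _))

/-- first linear form -/
noncomputable def lone : ℝ × ℝ × ℝ →L[ℝ] ℝ := ContinuousLinearMap.fst ℝ ℝ ℝ ∘L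
            ContinuousLinearMap.snd ℝ ℝ (ℝ × ℝ) - ContinuousLinearMap.fst ℝ ℝ (ℝ × ℝ)
/-- second linear form -/
noncomputable def ltwo : ℝ × ℝ × ℝ →L[ℝ] ℝ := ContinuousLinearMap.fst ℝ ℝ (ℝ × ℝ) +
          ContinuousLinearMap.fst ℝ ℝ ℝ ∘L ContinuousLinearMap.snd ℝ ℝ (ℝ × ℝ)
/-- third linear form -/
noncomputable def lthree : ℝ × ℝ × ℝ →L[ℝ] ℝ :=
  ContinuousLinearMap.snd ℝ ℝ ℝ ∘L ContinuousLinearMap.snd ℝ ℝ (ℝ × ℝ)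

lemma Rm_lin_strict (θ : ℝ) (l : ℝ × ℝ × ℝ →L[ℝ] ℝ) (i j : Fin 3) :
      HasStrictFDerivAt (fun x => Rm (l x) θ i j) (Rd θ i j • l) (0 : ℝ × ℝ × ℝ) := by
  have h1 : HasStrictDerivAt (fun β => Rm β θ i j) (Rd θ i j) (l 0) := by
    simpa using Rm_hasStrictDerivAt θ i j
  exact h1.comp_hasStrictFDerivAt (0 : ℝ × ℝ × ℝ) l.hasStrictFDerivAt

lemma Pm_one_strict (θ : ℝ) (l1 : ℝ × ℝ × ℝ →L[ℝ] ℝ) (i j : Fin 3) : HasStrictFDerivAt 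
    (fun x : ℝ × ℝ × ℝ => ((Rm 0 θ).transpose * Rm (l1 x) θ) i j)
    (((Rm 0 θ).transpose * Rd θ) i j • l1) 0 := by
  have h : HasStrictFDerivAt (fun x : ℝ × ℝ × ℝ => ∑ k, (Rm 0 θ).transpose i k * Rm (l1 x) θ k j)
    (∑ k, ((Rm 0 θ).transpose i k) • (Rd θ k j • l1)) 0 :=
    HasStrictFDerivAt.fun_sum fun k _ => (Rm_lin_strict θ l1 k j).const_mul _
  refine h.congr_fderiv ?_
  simp [Matrix.mul_apply, Finset.sum_smul, smul_smul]

lemma Pm_two_strict (θ : ℝ) (l2 : ℝ × ℝ × ℝ →L[ℝ] ℝ) (i j : Fin 3) : HasStrictFDerivAt 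
    (fun x : ℝ × ℝ × ℝ => (Rm (l2 x) θ * (Rm 0 θ).transpose) i j)
    ((Rd θ * (Rm 0 θ).transpose) i j • l2) 0 := by
  have h : HasStrictFDerivAt (fun x : ℝ × ℝ × ℝ => ∑ k, Rm (l2 x) θ i k * (Rm 0 θ).transpose k j)
    (∑ k, ((Rm 0 θ).transpose k j) • (Rd θ i k • l2)) 0 :=
    HasStrictFDerivAt.fun_sum fun k _ => (Rm_lin_strict θ l2 i k).mul_const _
  refine h.congr_fderiv ?_
  simp [Matrix.mul_apply, Finset.sum_smul, smul_smul, mul_comm]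

lemma Pm_three_strict (l3 : ℝ × ℝ × ℝ →L[ℝ] ℝ) (i j : Fin 3) : HasStrictFDerivAt 
    (fun x : ℝ × ℝ × ℝ => Rm 0 (l3 x) i j) (Um 0 i j • l3) 0 := by
  have h1 : HasStrictDerivAt (fun β => Rm 0 β i j) (Um 0 i j) (l3 0) := by
    simpa using Rm0_hasStrictDerivAt i j
  exact h1.comp_hasStrictFDerivAt (0 : ℝ × ℝ × ℝ) l3.hasStrictFDerivAt

lemma Pm_lin_strict (θ : ℝ) (l1 l2 l3 : ℝ × ℝ × ℝ →L[ℝ] ℝ) (i j : Fin 3) : HasStrictFDerivAt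
    (fun x : ℝ × ℝ × ℝ => (((Rm 0 θ).transpose * Rm (l1 x) θ) *
      (Rm (l2 x) θ * (Rm 0 θ).transpose) * Rm 0 (l3 x)) i j)
      ((((Rm 0 θ).transpose * Rd θ) i j) • l1 + ((Rd θ * (Rm 0 θ).transpose) i j) • l2 +
        (Um 0 i j) • l3) (0 : ℝ × ℝ × ℝ) := by
  have z1 : ((Rm 0 θ).transpose * Rm (l1 0) θ) = 1 := by
    rw [map_zero, (Rm_SO 0 θ).transpose_mul]
  have z2 : (Rm (l2 0) θ * (Rm 0 θ).transpose) = 1 := by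
    rw [map_zero, (Rm_SO 0 θ).1]
  have z3 : Rm 0 (l3 0) = 1 := by rw [map_zero, Rm_zero]
  have z12 : ((Rm 0 θ).transpose * Rm (l1 0) θ) * (Rm (l2 0) θ * (Rm 0 θ).transpose) = 1 := by
    rw [z1, z2, Matrix.one_mul]
  refine strict_mul (A' := fun i j => (((Rm 0 θ).transpose * Rd θ) i j) • l1 +
    ((Rd θ * (Rm 0 θ).transpose) i j) • l2) (B' := fun i j => (Um 0 i j) • l3)
    z12 z3 (fun i j => ?_) (fun i j => Pm_three_strict l3 i j) i j
  exact strict_mul (A' := fun i j => (((Rm 0 θ).transpose * Rd θ) i j) • l1)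
    (B' := fun i j => ((Rd θ * (Rm 0 θ).transpose) i j) • l2)
    z1 z2 (fun i j => Pm_one_strict θ l1 i j) (fun i j => Pm_two_strict θ l2 i j) i j

lemma Pm_strict (θ : ℝ) (i j : Fin 3) :
    HasStrictFDerivAt (fun x => Pm θ x i j)
      ((((Rm 0 θ).transpose * Rd θ) i j) • lone + ((Rd θ * (Rm 0 θ).transpose) i j) • ltwo +
        (Um 0 i j) • lthree) (0 : ℝ × ℝ × ℝ) := by
  have h : (fun x => Pm θ x i j) = (fun x : ℝ × ℝ × ℝ => (((Rm 0 θ).transpose * Rm (lone x) θ) *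
      (Rm (ltwo x) θ * (Rm 0 θ).transpose) * Rm 0 (lthree x)) i j) := by
    funext x
    have e1 : lone x = x.2.1 - x.1 := by simp [lone]
    have e2 : ltwo x = x.1 + x.2.1 := by simp [ltwo]
    have e3 : lthree x = x.2.2 := by simp [lthree]
    rw [e1, e2, e3, Pm]
  rw [h]
  exact Pm_lin_strict θ lone ltwo lthree i j

lemma local_steer {θ : ℝ} (hθ : 0 < θ) (hθ' : θ < π) {Y : ℝ → Matrix (Fin 3) (Fin 3) ℝ}
    (hY0 : Y 0 = 1) (hSO : ∀ᶠ η in 𝓝[>] (0 : ℝ), SOThree (Y η))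
    {D : Fin 3 → Fin 3 → ℝ} (hD : ∀ i j, HasDerivAt (fun η => Y η i j) (D i j) 0)
    (hneg : D 0 1 < 0) {δ : ℝ} (hδ : 0 < δ) :
    ∀ᶠ η in 𝓝[>] (0 : ℝ), ∃ β₁ β₂ τ : ℝ, |β₁| < δ ∧ |β₂| < δ ∧ |τ| < δ ∧ τ < 0 ∧
      ((Rm 0 θ).transpose * Rm β₁ θ) * (Rm β₂ θ * (Rm 0 θ).transpose) * Rm 0 τ = Y η := by
  have hS : 0 < sin θ := sin_pos_of_pos_of_lt_pi hθ hθ'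
  have hC : 0 < 1 - cos θ := by
    have := Real.cos_lt_cos_of_nonneg_of_le_pi le_rfl hθ'.le hθ
    rw [cos_zero] at this; linarith
  have hCS := sin_sq_add_cos_sq θ
  set Ψ : ℝ × ℝ × ℝ → ℝ × ℝ × ℝ := fun x =>
    ((2 * (1 - cos θ))⁻¹ * Pm θ x 0 2, (2 * sin θ)⁻¹ * Pm θ x 1 2, Pm θ x 0 1) with hΨ
  have hΨ' : HasStrictFDerivAt Ψ
      ((ContinuousLinearEquiv.refl ℝ (ℝ × ℝ × ℝ) : (ℝ × ℝ × ℝ) →L[ℝ] (ℝ × ℝ × ℝ))) 0 := by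
    have := ((Pm_strict θ 0 2).const_mul ((2 * (1 - cos θ))⁻¹)).prodMk
      (((Pm_strict θ 1 2).const_mul ((2 * sin θ)⁻¹)).prodMk (Pm_strict θ 0 1))
    refine this.congr_fderiv ?_
    have e1 : ((Rm 0 θ).transpose * Rd θ) 0 2 = -(1 - cos θ) := by
      simp [Rm, Rd, Matrix.mul_apply, Fin.sum_univ_three]; linarith
    have e2 : ((Rm 0 θ).transpose * Rd θ) 1 2 = sin θ := by
      simp [Rm, Rd, Matrix.mul_apply, Fin.sum_univ_three]; ring
    have e3 : ((Rm 0 θ).transpose * Rd θ) 0 1 = 0 := by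
      simp [Rm, Rd, Matrix.mul_apply, Fin.sum_univ_three]
    have e4 : (Rd θ * (Rm 0 θ).transpose) 0 2 = (1 - cos θ) := by
      simp [Rm, Rd, Matrix.mul_apply, Fin.sum_univ_three]
    have e5 : (Rd θ * (Rm 0 θ).transpose) 1 2 = sin θ := by
      simp [Rm, Rd, Matrix.mul_apply, Fin.sum_univ_three]
    have e6 : (Rd θ * (Rm 0 θ).transpose) 0 1 = 0 := by
      simp [Rm, Rd, Matrix.mul_apply, Fin.sum_univ_three]
    rw [e1, e2, e3, e4, e5, e6]
    refine ContinuousLinearMap.ext fun x => ?_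
    obtain ⟨a, b, t⟩ := x
    simp [Um, lone, ltwo, lthree]
    constructor <;> field_simp <;> ring
  have hΨ0 : Ψ 0 = 0 := by
    simp [hΨ, Pm_zero, Matrix.one_apply]
  set Φ := hΨ'.localInverse Ψ _ _ with hΦ
  set y : ℝ → ℝ × ℝ × ℝ := fun η =>
    ((2 * (1 - cos θ))⁻¹ * Y η 0 2, (2 * sin θ)⁻¹ * Y η 1 2, Y η 0 1) with hy
  have hy0 : y 0 = 0 := by simp [hy, hY0, Matrix.one_apply]
  have hy' : HasDerivAt y ((2 * (1 - cos θ))⁻¹ * D 0 2, (2 * sin θ)⁻¹ * D 1 2, D 0 1) 0 :=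
    ((hD 0 2).const_mul _).prodMk (((hD 1 2).const_mul _).prodMk (hD 0 1))
  have hΦ' := hΨ'.to_localInverse
  rw [hΨ0, ← hΦ] at hΦ'
  have hΦ0 : Φ 0 = 0 := by
    have := hΨ'.localInverse_apply_image
    rwa [hΨ0] at this
  have hright := hΨ'.eventually_right_inverse
  rw [hΨ0, ← hΦ] at hright
  have hz : HasDerivAt (fun η => Φ (y η))
      ((2 * (1 - cos θ))⁻¹ * D 0 2, (2 * sin θ)⁻¹ * D 1 2, D 0 1) 0 := by
    have h := hΦ'.hasFDerivAt
    rw [← hy0] at h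
    have := h.comp_hasDerivAt (0 : ℝ) hy'
    exact this.congr_deriv (by simp)
  have hzc : Tendsto (fun η => Φ (y η)) (𝓝 0) (𝓝 0) := by
    have := hz.continuousAt.tendsto
    simpa [hy0, hΦ0] using this
  have hycont : Tendsto y (𝓝 0) (𝓝 0) := by
    have := hy'.continuousAt.tendsto
    rwa [hy0] at this
  -- third component
  have hz3 : HasDerivAt (fun η => (Φ (y η)).2.2) (D 0 1) 0 := by
    have h := ((ContinuousLinearMap.snd ℝ ℝ ℝ ∘L ContinuousLinearMap.snd ℝ ℝ (ℝ × ℝ))).hasFDerivAt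
      (x := Φ (y 0)) |>.comp_hasDerivAt (0 : ℝ) hz
    exact h.congr_deriv (by simp)
  have hneg' : ∀ᶠ η in 𝓝[>] (0 : ℝ), (Φ (y η)).2.2 < 0 := by
    have h := hz3.tendsto_slope.mono_left (nhdsWithin_mono (0 : ℝ) (fun x (hx : 0 < x) => hx.ne'))
    have h' := h.eventually (gt_mem_nhds hneg)
    filter_upwards [h', self_mem_nhdsWithin] with η h1 (h2 : 0 < η)
    rw [slope_def_field, hy0, hΦ0] at h1
    simp only [Prod.snd_zero, sub_zero] at h1
    by_contra h3
    exact absurd (div_nonneg (not_lt.mp h3) h2.le) (not_le.mpr h1)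
  have hposP : ∀ i, ∀ᶠ x in 𝓝 (0 : ℝ × ℝ × ℝ), 0 < Pm θ x i i := by
    intro i
    have h := (Pm_strict θ i i).continuousAt.tendsto
    simp only [Pm_zero, Matrix.one_apply_eq] at h
    exact h.eventually (lt_mem_nhds one_pos)
  have hposY : ∀ i, ∀ᶠ η in 𝓝 (0 : ℝ), 0 < Y η i i := by
    intro i
    have h := (hD i i).continuousAt.tendsto
    simp only [hY0, Matrix.one_apply_eq] at h
    exact h.eventually (lt_mem_nhds one_pos)
  have hsmall : ∀ᶠ x in 𝓝 (0 : ℝ × ℝ × ℝ), |x.2.1 - x.1| < δ ∧ |x.1 + x.2.1| < δ ∧ |x.2.2| < δ := by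
    have c1 : ContinuousAt (fun x : ℝ × ℝ × ℝ => |x.2.1 - x.1|) 0 := by fun_prop
    have c2 : ContinuousAt (fun x : ℝ × ℝ × ℝ => |x.1 + x.2.1|) 0 := by fun_prop
    have c3 : ContinuousAt (fun x : ℝ × ℝ × ℝ => |x.2.2|) 0 := by fun_prop
    have d1 := c1.tendsto.eventually_lt_const (u := δ) (by simpa using hδ)
    have d2 := c2.tendsto.eventually_lt_const (u := δ) (by simpa using hδ)
    have d3 := c3.tendsto.eventually_lt_const (u := δ) (by simpa using hδ)
    filter_upwards [d1, d2, d3] with x h1 h2 h3 using ⟨h1, h2, h3⟩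
  have nw : 𝓝[>] (0 : ℝ) ≤ 𝓝 0 := nhdsWithin_le_nhds
  filter_upwards [hSO, hneg', nw (hzc.eventually hsmall), nw (hzc.eventually (hposP 0)),
    nw (hzc.eventually (hposP 2)), nw (hposY 0), nw (hposY 2), nw (hycont.eventually hright)]
    with η k1 k2 k3 k4 k5 k6 k7 k8
  refine ⟨_, _, _, k3.1, k3.2.1, k3.2.2, k2, ?_⟩
  change Pm θ (Φ (y η)) = Y η
  simp only [hΨ, hy, Prod.mk.injEq] at k8
  obtain ⟨q1, q2, q3⟩ := k8
  refine SO_eq_of_upper (Pm_SO _ _) k1 k4 k6 k5 k7 q3 ?_ ?_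
  · exact mul_left_cancel₀ (by positivity) q1
  · exact mul_left_cancel₀ (by positivity) q2

namespace AdmissiblePair

variable {α a b : ℝ} {γ : ℝ → Matrix (Fin 3) (Fin 3) ℝ} {u : ℝ → ℝ}

lemma so3 (h : AdmissiblePair α a b γ u) {t : ℝ} (ht : t ∈ Set.Icc a b) : SOThree (γ t) :=
  h.hso3 t ht

lemma cont_entry (h : AdmissiblePair α a b γ u) (i j : Fin 3) :
    ContinuousOn (fun t => γ t i j) (Set.Icc a b) := by
  have : Continuous (fun M : Matrix (Fin 3) (Fin 3) ℝ => M i j) := continuous_id.matrix_elem i j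
  exact this.comp_continuousOn h.hcont

lemma u_integrable (h : AdmissiblePair α a b γ u) {p q : ℝ} (hp : p ∈ Set.Icc a b)
    (hq : q ∈ Set.Icc a b) : IntervalIntegrable u volume p q := by
  have hI : IntegrableOn u (Set.Icc a b) volume := by
    refine Measure.integrableOn_of_bounded (M := 1) (by simp) h.humeas.aestronglyMeasurable ?_
    rw [ae_restrict_iff' measurableSet_Icc]
    exact Filter.Eventually.of_forall fun t ht => by simpa using h.hubound t ht
  rw [intervalIntegrable_iff]
  refine hI.mono_set (Set.uIoc_subset_uIcc.trans (Set.uIcc_subset_Icc hp hq))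

lemma integrable (h : AdmissiblePair α a b γ u) {p q : ℝ} (hp : p ∈ Set.Icc a b)
    (hq : q ∈ Set.Icc a b) (i j : Fin 3) :
    IntervalIntegrable (fun s => (γ s * (fM α + u s • gM α)) i j) volume p q := by
  have e : (fun s => (γ s * (fM α + u s • gM α)) i j) =
      fun s => ∑ k, (γ s i k * fM α k j + (γ s i k * u s) * gM α k j) := by
    funext s
    simp only [Matrix.mul_apply, Matrix.add_apply, Matrix.smul_apply, smul_eq_mul]
    exact Finset.sum_congr rfl fun k _ => by ring
  rw [e]
  have hsub := Set.uIcc_subset_Icc hp hq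
  have hint : ∀ k, IntervalIntegrable
      (fun s => (γ s i k * fM α k j + (γ s i k * u s) * gM α k j)) volume p q := by
    intro k
    have hc := (h.cont_entry i k).mono hsub
    exact (hc.intervalIntegrable.mul_const _).add
      (((h.u_integrable hp hq).continuousOn_mul hc).mul_const _)
  simp only [Fin.sum_univ_three]
  exact ((hint 0).add (hint 1)).add (hint 2)

lemma ode (h : AdmissiblePair α a b γ u) {p t : ℝ} (hp : p ∈ Set.Icc a b)
    (ht : t ∈ Set.Icc a b) (i j : Fin 3) :
    γ t i j = γ p i j + ∫ s in p..t, (γ s * (fM α + u s • gM α)) i j := by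
  have ha : a ∈ Set.Icc a b := ⟨le_rfl, h.hab⟩
  rw [h.hode t ht i j, h.hode p hp i j, add_assoc,
    intervalIntegral.integral_add_adjacent_intervals (h.integrable ha hp i j)
    (h.integrable hp ht i j)]

lemma restrict (h : AdmissiblePair α a b γ u) {p q : ℝ} (hp : a ≤ p) (hpq : p ≤ q) (hq : q ≤ b) :
    AdmissiblePair α p q γ u where
  hab := hpq
  humeas := h.humeas
  hubound t ht := h.hubound t ⟨hp.trans ht.1, ht.2.trans hq⟩
  hso3 t ht := h.hso3 t ⟨hp.trans ht.1, ht.2.trans hq⟩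
  hcont := h.hcont.mono (Set.Icc_subset_Icc hp hq)
  hode t ht i j := h.ode ⟨hp, hpq.trans hq⟩ ⟨hp.trans ht.1, ht.2.trans hq⟩ i j

lemma shift (h : AdmissiblePair α a b γ u) (r : ℝ) :
    AdmissiblePair α (a + r) (b + r) (fun t => γ (t - r)) (fun t => u (t - r)) where
  hab := by linarith [h.hab]
  humeas := h.humeas.comp (measurable_id.sub_const r)
  hubound t ht := h.hubound _ ⟨by linarith [ht.1], by linarith [ht.2]⟩
  hso3 t ht := h.hso3 _ ⟨by linarith [ht.1], by linarith [ht.2]⟩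
  hcont := h.hcont.comp (by fun_prop) (fun t ht => ⟨by linarith [ht.1], by linarith [ht.2]⟩)
  hode t ht i j := by
    rw [h.hode (t - r) ⟨by linarith [ht.1], by linarith [ht.2]⟩ i j]
    have := intervalIntegral.integral_comp_sub_right (a := a + r) (b := t)
      (fun s => (γ s * (fM α + u s • gM α)) i j) r
    rw [this]
    simp

lemma left_mul (h : AdmissiblePair α a b γ u) {A : Matrix (Fin 3) (Fin 3) ℝ} (hA : SOThree A) :
    AdmissiblePair α a b (fun t => A * γ t) u where
  hab := h.hab
  humeas := h.humeas
  hubound := h.hubound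
  hso3 t ht := hA.mul (h.hso3 t ht)
  hcont := (continuous_const.matrix_mul continuous_id).comp_continuousOn h.hcont
  hode t ht i j := by
    have ha : a ∈ Set.Icc a b := ⟨le_rfl, h.hab⟩
    have e : (fun s => (A * γ s * (fM α + u s • gM α)) i j) =
        fun s => ∑ k, A i k * (γ s * (fM α + u s • gM α)) k j := by
      funext s
      rw [Matrix.mul_assoc, Matrix.mul_apply]
    rw [e, intervalIntegral.integral_finsetSum
      (fun k _ => (h.integrable ha ht k j).const_mul _), Matrix.mul_apply, Matrix.mul_apply,
      ← Finset.sum_add_distrib]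
    refine Finset.sum_congr rfl fun k _ => ?_
    rw [intervalIntegral.integral_const_mul, h.hode t ht k j]
    ring

lemma concat {c : ℝ} {γ' : ℝ → Matrix (Fin 3) (Fin 3) ℝ} {u' : ℝ → ℝ}
    (h : AdmissiblePair α a b γ u) (h' : AdmissiblePair α b c γ' u') (hb : γ b = γ' b) :
    AdmissiblePair α a c (fun t => if t ≤ b then γ t else γ' t)
      (fun t => if t ≤ b then u t else u' t) := by
  have hab := h.hab
  have hbc := h'.hab
  have eq1 : ∀ i j t, t ≤ b → ∫ s in a..t, ((if s ≤ b then γ s else γ' s) *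
      (fM α + (if s ≤ b then u s else u' s) • gM α)) i j =
      ∫ s in a..t, (γ s * (fM α + u s • gM α)) i j := by
    intro i j t ht
    refine intervalIntegral.integral_congr_ae (Filter.Eventually.of_forall fun s hs => ?_)
    have : s ≤ b := hs.2.trans (max_le hab ht)
    simp only [this, if_true]
  have eq2 : ∀ i j t, b ≤ t → ∫ s in b..t, ((if s ≤ b then γ s else γ' s) *
      (fM α + (if s ≤ b then u s else u' s) • gM α)) i j =
      ∫ s in b..t, (γ' s * (fM α + u' s • gM α)) i j := by
    intro i j t ht
    refine intervalIntegral.integral_congr_ae (Filter.Eventually.of_forall fun s hs => ?_)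
    rw [Set.uIoc_of_le ht] at hs
    have : ¬ s ≤ b := not_le.mpr hs.1
    simp only [this, if_false]
  have ha : a ∈ Set.Icc a b := ⟨le_rfl, hab⟩
  have hb1 : b ∈ Set.Icc a b := ⟨hab, le_rfl⟩
  have hb2 : b ∈ Set.Icc b c := ⟨le_rfl, hbc⟩
  refine ⟨hab.trans hbc, Measurable.ite measurableSet_Iic h.humeas h'.humeas, ?_, ?_, ?_, ?_⟩
  · intro t ht
    by_cases htb : t ≤ b
    · simp only [htb, if_true]; exact h.hubound t ⟨ht.1, htb⟩
    · simp only [htb, if_false]; exact h'.hubound t ⟨(not_le.mp htb).le, ht.2⟩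
  · intro t ht
    by_cases htb : t ≤ b
    · simp only [htb, if_true]; exact h.hso3 t ⟨ht.1, htb⟩
    · simp only [htb, if_false]; exact h'.hso3 t ⟨(not_le.mp htb).le, ht.2⟩
  · rw [← Set.Icc_union_Icc_eq_Icc hab hbc]
    refine ContinuousOn.union_of_isClosed ?_ ?_ isClosed_Icc isClosed_Icc
    · refine h.hcont.congr fun t ht => ?_
      simp [ht.2]
    · refine h'.hcont.congr fun t ht => ?_
      by_cases htb : t ≤ b
      · have : t = b := le_antisymm htb ht.1
        simp [this, hb]
      · simp [htb]
  · intro t ht i j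
    by_cases htb : t ≤ b
    · rw [eq1 i j t htb]
      simp only [htb, if_true, hab]
      exact h.hode t ⟨ht.1, htb⟩ i j
    · have htb' := (not_le.mp htb).le
      have ht2 : t ∈ Set.Icc b c := ⟨htb', ht.2⟩
      rw [← intervalIntegral.integral_add_adjacent_intervals (b := b), eq1 i j b le_rfl,
        eq2 i j t htb']
      · simp only [htb, if_false, hab, if_true]
        rw [h'.hode t ht2 i j, ← hb, h.hode b hb1 i j]; ring
      · refine (h.integrable ha hb1 i j).congr_ae ?_
        rw [Filter.EventuallyEq, ae_restrict_iff' measurableSet_uIoc]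
        refine Filter.Eventually.of_forall fun s hs => ?_
        rw [Set.uIoc_of_le hab] at hs
        simp only [hs.2, if_true]
      · refine (h'.integrable hb2 ht2 i j).congr_ae ?_
        rw [Filter.EventuallyEq, ae_restrict_iff' measurableSet_uIoc]
        refine Filter.Eventually.of_forall fun s hs => ?_
        rw [Set.uIoc_of_le htb'] at hs
        simp only [not_le.mpr hs.1, if_false]

end AdmissiblePair

/-- The reflection conjugating `f, g` to `-f, -g`. -/
noncomputable def Dm : Matrix (Fin 3) (Fin 3) ℝ := Matrix.diagonal ![1, -1, 1]

lemma Dm_sq : Dm * Dm = 1 := by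
  ext i j; fin_cases i <;> fin_cases j <;> simp [Dm, Matrix.one_apply]

lemma Dm_transpose : Dm.transpose = Dm := by simp [Dm]

lemma Dm_det : Dm.det * Dm.det = 1 := by rw [← det_mul, Dm_sq, det_one]

lemma Dm_conj (α v : ℝ) : Dm * (fM α + v • gM α) * Dm = -(fM α + v • gM α) := by
  ext i j; fin_cases i <;> fin_cases j <;> simp [Dm, fM, gM, Matrix.mul_apply, Fin.sum_univ_three, Matrix.diagonal]

lemma Dm_conj_SO {A : Matrix (Fin 3) (Fin 3) ℝ} (hA : SOThree A) : SOThree (Dm * A * Dm) := by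
  constructor
  · have : Dm * A * Dm * (Dm * A * Dm).transpose = Dm * (A * (Dm * Dm) * A.transpose) * Dm := by
      simp only [Matrix.transpose_mul, Dm_transpose, Matrix.mul_assoc]
    rw [this, Dm_sq, Matrix.mul_one, hA.1, Matrix.mul_one, Dm_sq]
  · rw [det_mul, det_mul, hA.2, mul_one, Dm_det]

lemma AdmissiblePair.reverse {α a b : ℝ} {γ : ℝ → Matrix (Fin 3) (Fin 3) ℝ} {u : ℝ → ℝ}
    (h : AdmissiblePair α a b γ u) :
    AdmissiblePair α (-b) (-a) (fun t => Dm * γ (-t) * Dm) (fun t => u (-t)) where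
  hab := by linarith [h.hab]
  humeas := h.humeas.comp measurable_neg
  hubound t ht := h.hubound _ ⟨by linarith [ht.2], by linarith [ht.1]⟩
  hso3 t ht := Dm_conj_SO (h.hso3 _ ⟨by linarith [ht.2], by linarith [ht.1]⟩)
  hcont := by
    refine Continuous.comp_continuousOn (g := fun A => Dm * A * Dm)
      ((continuous_const.matrix_mul continuous_id).matrix_mul continuous_const)
      (h.hcont.comp (by fun_prop) (fun t ht => ⟨by linarith [ht.2], by linarith [ht.1]⟩))
  hode t ht i j := by
    have hb : b ∈ Set.Icc a b := ⟨h.hab, le_rfl⟩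
    have e : ∀ s, (Dm * γ (-s) * Dm * (fM α + u (-s) • gM α)) i j =
        -((Dm * (γ (-s) * (fM α + u (-s) • gM α)) * Dm) i j) := by
      intro s
      rw [← Matrix.neg_apply]
      have h1 : (fM α + u (-s) • gM α) = -(Dm * (fM α + u (-s) • gM α) * Dm) := by
        rw [Dm_conj]; simp
      have hM : Dm * γ (-s) * Dm * (fM α + u (-s) • gM α) =
          -(Dm * (γ (-s) * (fM α + u (-s) • gM α)) * Dm) := by
       calc Dm * γ (-s) * Dm * (fM α + u (-s) • gM α)
          = Dm * γ (-s) * Dm * -(Dm * (fM α + u (-s) • gM α) * Dm) := by rw [← h1]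
        _ = -(Dm * γ (-s) * (Dm * Dm) * (fM α + u (-s) • gM α) * Dm) := by
            simp only [Matrix.mul_neg, Matrix.mul_assoc]
        _ = -(Dm * (γ (-s) * (fM α + u (-s) • gM α)) * Dm) := by
            rw [Dm_sq]; simp only [Matrix.mul_one, Matrix.mul_assoc]
      rw [hM]
    have e2 : ∀ A : Matrix (Fin 3) (Fin 3) ℝ, (Dm * A * Dm) i j = Dm i i * A i j * Dm j j := by
      intro A
      simp [Dm, Matrix.mul_diagonal, Matrix.diagonal_mul]
    simp only [e, e2, neg_neg]
    have := intervalIntegral.integral_comp_neg (a := -b) (b := t)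
      (fun s => -(Dm i i * (γ s * (fM α + u s • gM α)) i j * Dm j j))
    rw [this, neg_neg, intervalIntegral.integral_neg, intervalIntegral.integral_mul_const,
      intervalIntegral.integral_const_mul, h.ode (p := -t) (t := b)
      ⟨by linarith [ht.2], by linarith [ht.1]⟩ hb i j]
    ring

lemma gen_eq {α v ω β : ℝ} (hc : ω * cos β = cos α) (hs : ω * sin β = v * sin α) :
    fM α + v • gM α = ω • Um β := by
  ext i j; fin_cases i <;> fin_cases j <;> simp [fM, gM, Um, hc, hs]

lemma arc_hasDerivAt (A : Matrix (Fin 3) (Fin 3) ℝ) (β ω p t : ℝ) (i j : Fin 3) :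
    HasDerivAt (fun t => (A * Rm β (ω * (t - p))) i j)
      ((A * Rm β (ω * (t - p)) * (ω • Um β)) i j) t := by
  have h : HasDerivAt (fun t => ∑ k, A i k * Rm β (ω * (t - p)) k j)
      (∑ k, A i k * ((Rm β (ω * (t - p)) * Um β) k j * ω)) t := by
    refine HasDerivAt.fun_sum fun k _ => ?_
    have h1 : HasDerivAt (fun t => ω * (t - p)) ω t := by
      simpa using ((hasDerivAt_id t).sub_const p).const_mul ω
    exact ((Rm_hasDerivAt β (ω * (t - p)) k j).comp t h1).const_mul (A i k)
  refine h.congr_deriv ?_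
  rw [Matrix.mul_assoc, Matrix.mul_smul, Matrix.mul_smul, Matrix.smul_apply, Matrix.mul_apply,
    Finset.smul_sum]
  exact Finset.sum_congr rfl fun k _ => by rw [smul_eq_mul]; ring

lemma AdmissiblePair.arc {α v ω β p q : ℝ} (hpq : p ≤ q) (hv : |v| ≤ 1)
    (hc : ω * cos β = cos α) (hs : ω * sin β = v * sin α) {A : Matrix (Fin 3) (Fin 3) ℝ}
    (hA : SOThree A) :
    AdmissiblePair α p q (fun t => A * Rm β (ω * (t - p))) (fun _ => v) where
  hab := hpq
  humeas := measurable_const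
  hubound _ _ := hv
  hso3 _ _ := hA.mul (Rm_SO _ _)
  hcont := by
    have : Continuous (fun t => A * Rm β (ω * (t - p))) :=
      continuous_const.matrix_mul ((Rm_continuous β).comp (by fun_prop))
    exact this.continuousOn
  hode t ht i j := by
    rw [gen_eq hc hs, intervalIntegral.integral_eq_sub_of_hasDerivAt
      (f := fun t => (A * Rm β (ω * (t - p))) i j) (fun s _ => arc_hasDerivAt A β ω p s i j)]
    · ring
    · apply Continuous.intervalIntegrable
      have : Continuous (fun t => A * Rm β (ω * (t - p)) * (ω • Um β)) :=
        (continuous_const.matrix_mul ((Rm_continuous β).comp (by fun_prop))).matrix_mul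
          continuous_const
      exact this.matrix_elem i j

/-! ### Reachability -/

/-- `B` is reachable from `A` in time `T`. -/
def Reach (α T : ℝ) (A B : Matrix (Fin 3) (Fin 3) ℝ) : Prop :=
  ∃ γ u, AdmissiblePair α 0 T γ u ∧ γ 0 = A ∧ γ T = B

lemma Reach.trans {α T T' : ℝ} {A B C : Matrix (Fin 3) (Fin 3) ℝ} (h : Reach α T A B)
    (h' : Reach α T' B C) : Reach α (T + T') A C := by
  obtain ⟨γ, u, h, h0, hT⟩ := h
  obtain ⟨γ', u', h', h0', hT'⟩ := h'
  have hs := h'.shift T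
  rw [zero_add] at hs
  have := h.concat hs (by simp [hT, h0'])
  rw [add_comm T' T] at this
  refine ⟨_, _, this, by simp [h.hab, h0], ?_⟩
  have hT0 := h'.hab
  by_cases hz : T' ≤ 0
  · have : T' = 0 := le_antisymm hz hT0
    subst this
    simp [hT, ← h0', ← hT']
  · simp [hz, hT']

lemma Reach.left_mul {α T : ℝ} {A B C : Matrix (Fin 3) (Fin 3) ℝ} (h : Reach α T A B)
    (hC : SOThree C) : Reach α T (C * A) (C * B) := by
  obtain ⟨γ, u, h, h0, hT⟩ := h
  exact ⟨_, _, h.left_mul hC, by simp [h0], by simp [hT]⟩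

lemma AdmissiblePair.reach {α a b : ℝ} {γ : ℝ → Matrix (Fin 3) (Fin 3) ℝ} {u : ℝ → ℝ}
    (h : AdmissiblePair α a b γ u) {p q : ℝ} (hp : a ≤ p) (hpq : p ≤ q) (hq : q ≤ b) :
    Reach α (q - p) (γ p) (γ q) := by
  have := (h.restrict hp hpq hq).shift (-p)
  simp only [← sub_eq_add_neg, sub_self, sub_neg_eq_add] at this
  exact ⟨_, _, this, by simp, by simp⟩

lemma TimeOptimal.le_of_reach {α a b : ℝ} {γ : ℝ → Matrix (Fin 3) (Fin 3) ℝ} {u : ℝ → ℝ}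
    (h : TimeOptimal α a b γ u) {p q T : ℝ} (hp : a ≤ p) (hpq : p ≤ q) (hq : q ≤ b)
    (hr : Reach α T (γ p) (γ q)) : q - p ≤ T := by
  obtain ⟨g, w, hg, h0, hT⟩ := ((h.1.reach le_rfl hp (hpq.trans hq)).trans hr).trans
    (h.1.reach (hp.trans hpq) hq le_rfl)
  have := h.2 _ _ _ _ hg h0 hT
  linarith

lemma TimeOptimal.restrict {α a b : ℝ} {γ : ℝ → Matrix (Fin 3) (Fin 3) ℝ} {u : ℝ → ℝ}
    (h : TimeOptimal α a b γ u) {p q : ℝ} (hp : a ≤ p) (hpq : p ≤ q) (hq : q ≤ b) :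
    TimeOptimal α p q γ u := by
  refine ⟨h.1.restrict hp hpq hq, fun a' b' γ' u' h' h0 hT => ?_⟩
  refine h.le_of_reach hp hpq hq ?_
  rw [← h0, ← hT]
  exact h'.reach le_rfl h'.hab le_rfl

lemma TimeOptimal.reverse {α a b : ℝ} {γ : ℝ → Matrix (Fin 3) (Fin 3) ℝ} {u : ℝ → ℝ}
    (h : TimeOptimal α a b γ u) :
    TimeOptimal α (-b) (-a) (fun t => Dm * γ (-t) * Dm) (fun t => u (-t)) := by
  refine ⟨h.1.reverse, fun a' b' γ' u' h' h0 hT => ?_⟩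
  have key : ∀ A : Matrix (Fin 3) (Fin 3) ℝ, Dm * (Dm * A * Dm) * Dm = A := by
    intro A
    calc Dm * (Dm * A * Dm) * Dm = (Dm * Dm) * A * (Dm * Dm) := by simp only [Matrix.mul_assoc]
      _ = A := by rw [Dm_sq]; simp
  have := h.2 _ _ _ _ h'.reverse (by simp [hT, key]) (by simp [h0, key])
  linarith

lemma TimeOptimal.ne {α a b : ℝ} {γ : ℝ → Matrix (Fin 3) (Fin 3) ℝ} {u : ℝ → ℝ}
    (h : TimeOptimal α a b γ u) {p q : ℝ} (hp : a ≤ p) (hpq : p < q) (hq : q ≤ b) :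
    γ p ≠ γ q := by
  intro he
  have h1 := h.1.reach hp le_rfl (hpq.le.trans hq)
  have := h.le_of_reach hp hpq.le hq (T := p - p) (by rw [← he]; exact h1)
  linarith

lemma reach_arc {α β θ : ℝ} (hα : α ∈ Set.Ioo 0 (π / 2)) (hβ : |β| ≤ α) (hθ : 0 ≤ θ)
    {A : Matrix (Fin 3) (Fin 3) ℝ} (hA : SOThree A) :
    Reach α (θ * cos β / cos α) A (A * Rm β θ) := by
  have hb := abs_le.mp hβ
  have hcα : 0 < cos α := cos_pos_of_mem_Ioo ⟨by linarith [hα.1, pi_pos], hα.2⟩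
  have hcβ : 0 < cos β := cos_pos_of_mem_Ioo ⟨by linarith [hα.2], by linarith [hα.2]⟩
  have hsα : 0 < sin α := sin_pos_of_pos_of_lt_pi hα.1 (by linarith [hα.2, pi_pos])
  have h1 : 0 ≤ sin (α - β) := sin_nonneg_of_nonneg_of_le_pi (by linarith) (by linarith [hα.2])
  have h2 : 0 ≤ sin (α + β) := sin_nonneg_of_nonneg_of_le_pi (by linarith) (by linarith [hα.2])
  rw [sin_sub] at h1
  rw [sin_add] at h2
  have hT : 0 ≤ θ * cos β / cos α := by positivity
  have := AdmissiblePair.arc (α := α) (v := cos α * sin β / (sin α * cos β))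
    (ω := cos α / cos β) (β := β) hT
    (by rw [abs_div, abs_of_pos (by positivity : 0 < sin α * cos β),
          div_le_one (by positivity), abs_le]
        constructor <;> linarith)
    (by field_simp) (by field_simp) hA
  refine ⟨_, _, this, by simp [Rm_zero], ?_⟩
  have e : cos α / cos β * (θ * cos β / cos α - 0) = θ := by field_simp; simp
  simp only [e]

lemma reach_bang {α v η : ℝ} (hα : α ∈ Set.Ioo 0 (π / 2)) (hv : v = 1 ∨ v = -1) (hη : 0 ≤ η)
    {A : Matrix (Fin 3) (Fin 3) ℝ} (hA : SOThree A) :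
    Reach α η A (A * Rm (v * α) η) := by
  have hcα : 0 < cos α := cos_pos_of_mem_Ioo ⟨by linarith [hα.1, pi_pos], hα.2⟩
  have hc : cos (v * α) = cos α := by rcases hv with h | h <;> simp [h]
  have := reach_arc (β := v * α) hα
    (by rcases hv with h | h <;> simp [h, abs_of_pos hα.1]) hη hA
  rwa [hc, mul_div_assoc, div_self hcα.ne', mul_one] at this

lemma reach_steer {α β₁ β₂ θ τ : ℝ} (hα : α ∈ Set.Ioo 0 (π / 2)) (h1 : |β₁| ≤ α) (h2 : |β₂| ≤ α)
    (hθ : 0 ≤ θ) (hτ : 0 ≤ θ + τ) {A : Matrix (Fin 3) (Fin 3) ℝ} (hA : SOThree A) :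
    ∃ T ≤ (3 * θ + τ) / cos α,
      Reach α T A (A * Rm β₁ θ * Rm β₂ θ * Rm 0 (θ + τ)) := by
  have hcα : 0 < cos α := cos_pos_of_mem_Ioo ⟨by linarith [hα.1, pi_pos], hα.2⟩
  have r1 := reach_arc hα h1 hθ hA
  have r2 := reach_arc hα h2 hθ (hA.mul (Rm_SO β₁ θ))
  have r3 := reach_arc (β := 0) hα (by simpa using hα.1.le) hτ
    ((hA.mul (Rm_SO β₁ θ)).mul (Rm_SO β₂ θ))
  refine ⟨_, ?_, (r1.trans r2).trans r3⟩
  rw [← add_div, ← add_div]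
  apply div_le_div_of_nonneg_right _ hcα.le
  have := mul_le_of_le_one_right hθ (cos_le_one β₁)
  have := mul_le_of_le_one_right hθ (cos_le_one β₂)
  simp only [cos_zero, mul_one]
  linarith

/-- almost everywhere differentiability -/
lemma AdmissiblePair.ae_hasDerivAt {α a b : ℝ} {γ : ℝ → Matrix (Fin 3) (Fin 3) ℝ} {u : ℝ → ℝ}
    (h : AdmissiblePair α a b γ u) : ∀ᵐ t, t ∈ Set.Ioo a b → ∀ i j,
      HasDerivAt (fun s => γ s i j) ((γ t * (fM α + u t • gM α)) i j) t := by
  have ha : a ∈ Set.Icc a b := ⟨le_rfl, h.hab⟩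
  have hb : b ∈ Set.Icc a b := ⟨h.hab, le_rfl⟩
  have key : ∀ i j, ∀ᵐ t, t ∈ Set.Ioo a b → 
      HasDerivAt (fun s => γ s i j) ((γ t * (fM α + u t • gM α)) i j) t := by
    intro i j
    have := (h.integrable ha hb i j).ae_hasDerivAt_integral
    filter_upwards [this] with t ht hm
    have h1 := ht (by rw [Set.uIcc_of_le h.hab]; exact Set.Ioo_subset_Icc_self hm) a
      (by rw [Set.uIcc_of_le h.hab]; exact ha)
    refine (h1.const_add (γ a i j)).congr_of_eventuallyEq ?_
    filter_upwards [isOpen_Ioo.mem_nhds hm] with s hs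
    exact h.hode s (Set.Ioo_subset_Icc_self hs) i j
  have k2 : ∀ᵐ t, ∀ i j, t ∈ Set.Ioo a b → 
      HasDerivAt (fun s => γ s i j) ((γ t * (fM α + u t • gM α)) i j) t := by
    rw [ae_all_iff]; intro i; rw [ae_all_iff]; intro j; exact key i j
  filter_upwards [k2] with t ht hm i j
  exact ht i j hm

lemma Um_skew_sum (E : Matrix (Fin 3) (Fin 3) ℝ) (ω β : ℝ) :
    ∑ i, ∑ j, E i j * (E * (ω • Um β)) i j = 0 := by
  simp [Fin.sum_univ_three, Um, Matrix.mul_apply]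
  ring

/-- trajectories of constant controls -/
lemma AdmissiblePair.eq_arc {α a b : ℝ} {γ : ℝ → Matrix (Fin 3) (Fin 3) ℝ} {u : ℝ → ℝ}
    (h : AdmissiblePair α a b γ u) {p q v ω β : ℝ} (hp : a ≤ p) (hq : q ≤ b)
    (hu : ∀ᵐ t, t ∈ Set.Ioo p q → u t = v)
    (hc : ω * cos β = cos α) (hs : ω * sin β = v * sin α) :
    ∀ t ∈ Set.Icc p q, γ t = γ p * Rm β (ω * (t - p)) := by
  intro t0 ht0
  have hpq : p ≤ q := ht0.1.trans ht0.2
  have h' := h.restrict hp hpq hq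
  have hX := gen_eq (α := α) hc hs
  set G : ℝ → Matrix (Fin 3) (Fin 3) ℝ := fun t => γ (max p (min q t)) with hG
  have hclamp : ∀ t, max p (min q t) ∈ Set.Icc p q := fun t =>
    ⟨le_max_left _ _, max_le hpq (min_le_left _ _)⟩
  have hclamp2 : ∀ t ∈ Set.Icc p q, max p (min q t) = t := fun t ht => by
    rw [min_eq_right ht.2, max_eq_right ht.1]
  have hGc : Continuous G := h'.hcont.comp_continuous (by fun_prop) hclamp
  set F : Fin 3 → Fin 3 → ℝ → ℝ := fun i j t => γ p i j + ∫ s in p..t, (G s * (ω • Um β)) i j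
    with hF
  have hGc2 : ∀ i j, Continuous (fun s => (G s * (ω • Um β)) i j) := fun i j =>
    (hGc.matrix_mul continuous_const).matrix_elem i j
  have hFd : ∀ i j t, HasDerivAt (F i j) ((G t * (ω • Um β)) i j) t := fun i j t =>
    ((hGc2 i j).integral_hasStrictDerivAt p t).hasDerivAt.const_add _
  have hFe : ∀ t ∈ Set.Icc p q, ∀ i j, F i j t = γ t i j := by
    intro t ht i j
    rw [h'.hode t ht i j, hF]
    simp only
    congr 1
    refine intervalIntegral.integral_congr_ae ?_
    have hq0 : ∀ᵐ s : ℝ, s ≠ q := by simp [ae_iff]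
    filter_upwards [hu, hq0] with s hs hsq hst
    rw [Set.uIoc_of_le ht.1] at hst
    have hsI : s ∈ Set.Icc p q := ⟨hst.1.le, hst.2.trans ht.2⟩
    rw [hs ⟨hst.1, lt_of_le_of_ne hsI.2 hsq⟩, hX, hG]
    simp only [hclamp2 s hsI]
  set S : ℝ → Matrix (Fin 3) (Fin 3) ℝ := fun t => γ p * Rm β (ω * (t - p)) with hS
  set φ : ℝ → ℝ := fun t => ∑ i, ∑ j, (F i j t - S t i j) ^ 2 with hφ
  have hφd : ∀ t ∈ Set.Icc p q, HasDerivAt φ 0 t := by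
    intro t ht
    have : HasDerivAt φ (∑ i, ∑ j, 2 * (F i j t - S t i j) *
        ((G t * (ω • Um β)) i j - (S t * (ω • Um β)) i j)) t := by
      refine HasDerivAt.fun_sum fun i _ => HasDerivAt.fun_sum fun j _ => ?_
      have := ((hFd i j t).sub (arc_hasDerivAt (γ p) β ω p t i j)).fun_pow 2
      refine this.congr_deriv ?_
      simp [hS]
    refine this.congr_deriv ?_
    have hGt : G t = γ t := by simp only [hG, hclamp2 t ht]
    have := Um_skew_sum (γ t - S t) ω β
    rw [Matrix.sub_mul] at this
    simp only [Matrix.sub_apply] at this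
    simp only [hFe t ht, hGt, mul_assoc, ← Finset.mul_sum, this, mul_zero]
  have hφ0 : φ t0 = φ p := by
    refine constant_of_has_deriv_right_zero (f := φ) (a := p) (b := q)
      (fun t ht => (hφd t ht).continuousAt.continuousWithinAt)
      (fun t ht => (hφd t ⟨ht.1, ht.2.le⟩).hasDerivWithinAt) t0 ht0
  have hp0 : φ p = 0 := by simp [hφ, hF, hS, Rm_zero]
  rw [hp0, hφ] at hφ0
  simp only at hφ0
  rw [Finset.sum_eq_zero_iff_of_nonneg
    (fun i _ => Finset.sum_nonneg fun j _ => sq_nonneg _)] at hφ0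
  ext i j
  have h1 := hφ0 i (Finset.mem_univ _)
  rw [Finset.sum_eq_zero_iff_of_nonneg (fun j _ => sq_nonneg _)] at h1
  have h2 := h1 j (Finset.mem_univ _)
  rw [hFe t0 ht0] at h2
  have := pow_eq_zero_iff two_ne_zero |>.mp h2
  simp only [hS] at this
  linarith

/-! ### The maximum condition along an optimal trajectory starting with a singular arc -/
open Filter Topology

lemma mul_hasDerivAt_entry {P Q : ℝ → Matrix (Fin 3) (Fin 3) ℝ} {P' Q' : Matrix (Fin 3) (Fin 3) ℝ}
    {t : ℝ} (hP : ∀ i j, HasDerivAt (fun s => P s i j) (P' i j) t)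
    (hQ : ∀ i j, HasDerivAt (fun s => Q s i j) (Q' i j) t) (i j : Fin 3) :
    HasDerivAt (fun s => (P s * Q s) i j) ((P' * Q t + P t * Q') i j) t := by
  have : HasDerivAt (fun s => ∑ k, P s i k * Q s k j)
      (∑ k, (P' i k * Q t k j + P t i k * Q' k j)) t :=
    HasDerivAt.fun_sum fun k _ => (hP i k).mul (hQ k j)
  refine this.congr_deriv ?_
  rw [Finset.sum_add_distrib]; rfl

lemma SO_cof {A : Matrix (Fin 3) (Fin 3) ℝ} (hM : SOThree A) :
    A 1 0 * A 2 1 - A 2 0 * A 1 1 = A 0 2 := by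
  have hadj : A.transpose = A.adjugate := by
    have : A.adjugate * (A * A.transpose) = A.transpose := by
      rw [← Matrix.mul_assoc, adjugate_mul, hM.2]; simp
    rw [← this, hM.1, Matrix.mul_one]
  have c1 := congrFun (congrFun hadj 2) 0
  simp [adjugate_fin_three] at c1
  linarith

lemma mul_Rm_zero_col (A : Matrix (Fin 3) (Fin 3) ℝ) (θ : ℝ) (i : Fin 3) :
    (A * Rm 0 θ) i 2 = A i 2 := by
  simp [Matrix.mul_apply, Fin.sum_univ_three, Rm]

lemma conj_g_entry (A : Matrix (Fin 3) (Fin 3) ℝ) (α : ℝ) (hA : SOThree A) :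
    (A.transpose * gM α * A) 0 1 = sin α * A 0 2 := by
  rw [← SO_cof hA]
  simp [Matrix.mul_apply, Fin.sum_univ_three, gM]
  ring

lemma max_condition_aux {α a b : ℝ} {γ : ℝ → Matrix (Fin 3) (Fin 3) ℝ} {u : ℝ → ℝ}
    (hα : α ∈ Set.Ioo 0 (π / 2)) (h : TimeOptimal α a b γ u) {c₀ d₀ θ : ℝ} (hc0 : a ≤ c₀)
    (hd0 : d₀ ≤ b) (hθ : 0 < θ) (hθπ : θ < π) (hcd : d₀ = c₀ + 3 * θ / cos α)
    (hd : γ d₀ = γ c₀ * Rm 0 (3 * θ)) {τ₀ v : ℝ} (hτ₀ : τ₀ ∈ Set.Ioo d₀ b) (hv : v = 1 ∨ v = -1)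
    (hder : ∀ i j, HasDerivAt (fun s => γ s i j) ((γ τ₀ * (fM α + u τ₀ • gM α)) i j) τ₀) :
    (v - u τ₀) * ((γ τ₀).transpose * γ d₀) 0 2 ≤ 0 := by
  by_contra! hpos
  have hcα : 0 < cos α := cos_pos_of_mem_Ioo ⟨by linarith [hα.1, pi_pos], hα.2⟩
  have hsα : 0 < sin α := sin_pos_of_pos_of_lt_pi hα.1 (by linarith [hα.2, pi_pos])
  have hcd0 : c₀ < d₀ := by
    have : 0 < 3 * θ / cos α := by positivity
    linarith
  have S0 : SOThree (γ c₀) := h.1.so3 ⟨hc0, hcd0.le.trans hd0⟩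
  have Sd : SOThree (γ d₀) := h.1.so3 ⟨hc0.trans hcd0.le, hd0⟩
  have ST : SOThree (γ τ₀) := h.1.so3 ⟨(hc0.trans hcd0.le).trans hτ₀.1.le, hτ₀.2.le⟩
  obtain ⟨B, hB⟩ : ∃ B, B = γ c₀ * Rm 0 θ := ⟨_, rfl⟩
  have SB : SOThree B := hB ▸ S0.mul (Rm_SO 0 θ)
  obtain ⟨A, hA⟩ : ∃ A, A = (γ τ₀).transpose * B := ⟨_, rfl⟩
  have SA : SOThree A := hA ▸ ST.transpose.mul SB
  have hA02 : ((γ τ₀).transpose * γ d₀) 0 2 = A 0 2 := by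
    rw [hd, hA, hB, ← Matrix.mul_assoc, ← Matrix.mul_assoc, mul_Rm_zero_col, mul_Rm_zero_col]
  rw [hA02] at hpos
  have hgen : fM α + v • gM α = (1 : ℝ) • Um (v * α) := by
    apply gen_eq
    · rcases hv with h | h <;> simp [h]
    · rcases hv with h | h <;> simp [h]
  rw [one_smul] at hgen
  have hAT : B.transpose * γ τ₀ = A.transpose := by
    rw [hA, Matrix.transpose_mul, transpose_transpose]
  set Y : ℝ → Matrix (Fin 3) (Fin 3) ℝ := fun η =>
    (B.transpose * γ (τ₀ + η)) * ((Rm (v * α) η).transpose * A) with hY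
  have hY0 : Y 0 = 1 := by
    simp only [hY, add_zero, Rm_zero, hAT, transpose_one, Matrix.one_mul, SA.transpose_mul]
  have hηb : ∀ᶠ η in 𝓝[>] (0:ℝ), 0 < η ∧ τ₀ + η < b := by
    have h1 : ∀ᶠ η in 𝓝[>] (0:ℝ), η < b - τ₀ :=
      nhdsWithin_le_nhds (Iio_mem_nhds (by linarith [hτ₀.2]))
    filter_upwards [h1, self_mem_nhdsWithin] with η h1 h2
    exact ⟨h2, by linarith⟩
  have hτa : a ≤ τ₀ := (hc0.trans hcd0.le).trans hτ₀.1.le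
  have hSO : ∀ᶠ η in 𝓝[>] 0, SOThree (Y η) := by
    filter_upwards [hηb] with η hη
    exact (SB.transpose.mul (h.1.so3 ⟨by linarith, hη.2.le⟩)).mul
      ((Rm_SO _ _).transpose.mul SA)
  have hP : ∀ i j, HasDerivAt (fun η => (B.transpose * γ (τ₀ + η)) i j)
      ((B.transpose * (γ τ₀ * (fM α + u τ₀ • gM α))) i j) 0 := by
    intro i j
    have h1 : ∀ i j, HasDerivAt (fun η => γ (τ₀ + η) i j)
        ((γ τ₀ * (fM α + u τ₀ • gM α)) i j) 0 := by
      intro i j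
      have := hder i j
      rw [← add_zero τ₀] at this
      have := HasDerivAt.comp_const_add τ₀ 0 this
      simpa using this
    have := mul_hasDerivAt_entry (P := fun _ => B.transpose) (P' := 0)
      (fun i j => hasDerivAt_const _ _) h1 i j
    simpa using this
  have hQ : ∀ i j, HasDerivAt (fun η => ((Rm (v * α) η).transpose * A) i j)
      (((Um (v * α)).transpose * A) i j) 0 := by
    intro i j
    have h1 : ∀ i j, HasDerivAt (fun η => (Rm (v * α) η).transpose i j)
        ((Um (v * α)).transpose i j) 0 := by
      intro i j
      have := Rm_hasDerivAt (v * α) 0 j i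
      rw [Rm_zero, Matrix.one_mul] at this
      exact this
    have := mul_hasDerivAt_entry (Q := fun _ => A) (Q' := 0) h1
      (fun i j => hasDerivAt_const _ _) i j
    simpa using this
  have hUT : (Um (v * α)).transpose = -(fM α + v • gM α) := by
    rw [hgen]
    ext i j; fin_cases i <;> fin_cases j <;> simp [Um]
  have hD : ∀ i j, HasDerivAt (fun η => Y η i j)
      (((u τ₀ - v) • (A.transpose * gM α * A)) i j) 0 := by
    intro i j
    have := mul_hasDerivAt_entry hP hQ i j
    refine this.congr_deriv ?_
    refine congrFun (congrFun ?_ i) j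
    simp only [add_zero, Rm_zero, transpose_one, Matrix.one_mul]
    have e0 : B.transpose * (γ τ₀ * (fM α + u τ₀ • gM α)) =
        A.transpose * (fM α + u τ₀ • gM α) := by rw [← Matrix.mul_assoc, hAT]
    rw [e0, hAT, hUT]
    have : (u τ₀ - v) • (A.transpose * gM α * A) =
        A.transpose * ((fM α + u τ₀ • gM α) + -(fM α + v • gM α)) * A := by
      have e : (fM α + u τ₀ • gM α) + -(fM α + v • gM α) = (u τ₀ - v) • gM α := by
        rw [sub_smul]; abel
      rw [e, Matrix.mul_smul, Matrix.smul_mul]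
    rw [this]
    simp only [Matrix.mul_assoc, Matrix.add_mul, Matrix.mul_add]
    rfl
  have hneg : ((u τ₀ - v) • (A.transpose * gM α * A)) 0 1 < 0 := by
    rw [Matrix.smul_apply, conj_g_entry A α SA, smul_eq_mul]
    have := mul_pos hsα hpos
    nlinarith
  have hst := local_steer hθ hθπ hY0 hSO (D := fun i j => ((u τ₀ - v) • (A.transpose * gM α * A)) i j) hD hneg (δ := min α θ) (lt_min hα.1 hθ)
  obtain ⟨η, ⟨β₁, β₂, τ, hβ₁, hβ₂, hτ, hτ0, heq⟩, hη0, hηb⟩ := (hst.and hηb).exists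
  have hτθ : 0 ≤ θ + τ := by
    have := (abs_lt.mp (hτ.trans_le (min_le_right _ _))).1
    linarith
  obtain ⟨T, hT, hr⟩ := reach_steer hα (hβ₁.le.trans (min_le_left _ _))
    (hβ₂.le.trans (min_le_left _ _)) hθ.le hτθ S0
  set C := γ (τ₀ + η) * (Rm (v * α) η).transpose * (γ τ₀).transpose with hC
  have SN : SOThree (γ (τ₀ + η)) := h.1.so3 ⟨by linarith, hηb.le⟩
  have SC : SOThree C := (SN.mul (Rm_SO _ _).transpose).mul ST.transpose
  have key : γ c₀ * Rm β₁ θ * Rm β₂ θ * Rm 0 (θ + τ) = C * γ d₀ := by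
    have e1 : Rm 0 (θ + τ) = (Rm 0 θ).transpose * Rm 0 τ * Rm 0 (2 * θ) := by
      rw [Rm_zero_transpose, ← Rm_zero_add, ← Rm_zero_add]; congr 1; ring
    have e2 : γ c₀ = B * (Rm 0 θ).transpose := by
      rw [hB, Matrix.mul_assoc, (Rm_SO 0 θ).1, Matrix.mul_one]
    have e3 : C * γ d₀ = B * Y η * Rm 0 (2 * θ) := by
      have e4 : γ d₀ = B * Rm 0 (2 * θ) := by
        rw [hd, hB, Matrix.mul_assoc, ← Rm_zero_add]; congr 2; ring
      have e5 : B * Y η = (B * B.transpose) * (γ (τ₀ + η) * (Rm (v * α) η).transpose * A) := by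
        simp only [hY, Matrix.mul_assoc]
      rw [e5, SB.1, Matrix.one_mul, e4, hC, hA]
      simp only [Matrix.mul_assoc]
    rw [e3, ← heq, e1]
    nth_rewrite 1 [e2]
    simp only [Matrix.mul_assoc]
  rw [key] at hr
  have r2 := (h.1.reach (hc0.trans hcd0.le) hτ₀.1.le hτ₀.2.le).left_mul SC
  have hCT : C * γ τ₀ = γ (τ₀ + η) * (Rm (v * α) η).transpose := by
    rw [hC, Matrix.mul_assoc, ST.transpose_mul, Matrix.mul_one]
  rw [hCT] at r2
  have r3 := reach_bang hα hv hη0.le (SN.mul (Rm_SO (v * α) η).transpose)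
  rw [Matrix.mul_assoc, (Rm_SO (v * α) η).transpose_mul, Matrix.mul_one] at r3
  have fin := h.le_of_reach hc0 (by linarith [hτ₀.1]) hηb.le ((hr.trans r2).trans r3)
  have : (3 * θ + τ) / cos α < 3 * θ / cos α := by
    apply div_lt_div_of_pos_right _ hcα; linarith
  linarith

lemma max_condition {α a b : ℝ} {γ : ℝ → Matrix (Fin 3) (Fin 3) ℝ} {u : ℝ → ℝ}
    (hα : α ∈ Set.Ioo 0 (π / 2)) (h : TimeOptimal α a b γ u) {d₀ : ℝ} (had : a < d₀)
    (hd0 : d₀ ≤ b) (hu : ∀ᵐ t, t ∈ Set.Ioo a d₀ → u t = 0) :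
    ∀ᵐ t, t ∈ Set.Ioo d₀ b → ∀ v : ℝ, (v = 1 ∨ v = -1) →
      (v - u t) * ((γ t).transpose * γ d₀) 0 2 ≤ 0 := by
  have hcα : 0 < cos α := cos_pos_of_mem_Ioo ⟨by linarith [hα.1, pi_pos], hα.2⟩
  obtain ⟨θ, hθ, hθπ, hθd⟩ : ∃ θ, 0 < θ ∧ θ < π ∧ 3 * θ / cos α ≤ d₀ - a := by
    refine ⟨min (cos α * (d₀ - a) / 3) 1, lt_min (by have := sub_pos.mpr had; positivity) one_pos,
      (min_le_right _ _).trans_lt (by linarith [pi_gt_three]), ?_⟩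
    rw [div_le_iff₀ hcα]
    have := min_le_left (cos α * (d₀ - a) / 3) 1
    linarith
  have hpos : 0 < 3 * θ / cos α := by positivity
  have hd : γ d₀ = γ (d₀ - 3 * θ / cos α) * Rm 0 (3 * θ) := by
    have := h.1.eq_arc (p := d₀ - 3 * θ / cos α) (q := d₀) (v := 0) (ω := cos α) (β := 0)
      (by linarith) hd0
      (by filter_upwards [hu] with t ht hm; exact ht ⟨by linarith [hm.1], hm.2⟩)
      (by simp) (by simp) d₀ ⟨by linarith, le_rfl⟩
    rw [this]
    congr 2
    field_simp; ring
  filter_upwards [h.1.ae_hasDerivAt] with t ht hm v hv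
  exact max_condition_aux hα h (c₀ := d₀ - 3 * θ / cos α) (by linarith) hd0 hθ hθπ (by ring) hd hm hv
    (ht ⟨had.trans hm.1, hm.2⟩)

/-! ### Structure of optimal trajectories starting with a singular arc -/

lemma ac_of_dist_le {f g : ℝ → ℝ} {a b : ℝ} (hf : AbsolutelyContinuousOnInterval f a b)
    (h : ∀ x ∈ Set.uIcc a b, ∀ y ∈ Set.uIcc a b, dist (g x) (g y) ≤ dist (f x) (f y)) :
    AbsolutelyContinuousOnInterval g a b := by
  rw [absolutelyContinuousOnInterval_iff] at hf ⊢
  intro ε hε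
  obtain ⟨δ, hδ, H⟩ := hf ε hε
  refine ⟨δ, hδ, fun E hE hs => lt_of_le_of_lt (Finset.sum_le_sum fun i hi => ?_) (H E hE hs)⟩
  have := hE.1 i hi
  exact h _ this.1 _ this.2

lemma AdmissiblePair.ac {α a b : ℝ} {γ : ℝ → Matrix (Fin 3) (Fin 3) ℝ} {u : ℝ → ℝ}
    (h : AdmissiblePair α a b γ u) (i j : Fin 3) :
    AbsolutelyContinuousOnInterval (fun t => γ t i j) a b := by
  have ha : a ∈ Set.Icc a b := ⟨le_rfl, h.hab⟩
  have hb : b ∈ Set.Icc a b := ⟨h.hab, le_rfl⟩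
  refine ac_of_dist_le ((h.integrable ha hb i j).absolutelyContinuousOnInterval_intervalIntegral
    (c := a) (by simp)) fun x hx y hy => ?_
  rw [Set.uIcc_of_le h.hab] at hx hy
  rw [h.hode x hx i j, h.hode y hy i j, dist_add_left]

lemma AdmissiblePair.col0_hasDerivAt {α a b : ℝ} {γ : ℝ → Matrix (Fin 3) (Fin 3) ℝ} {u : ℝ → ℝ}
    (h : AdmissiblePair α a b γ u) {t : ℝ} (ht : t ∈ Set.Ioo a b) (i : Fin 3) :
    HasDerivAt (fun s => γ s i 0) (-(cos α * γ t i 1)) t := by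
  have e : ∀ s, (γ s * (fM α + u s • gM α)) i 0 = -(cos α * γ s i 1) := by
    intro s
    simp [Matrix.mul_apply, Fin.sum_univ_three, fM, gM]
    ring
  have ht' := Set.Ioo_subset_Icc_self ht
  have hI := h.integrable (p := a) (q := t) ⟨le_rfl, h.hab⟩ ht' i 0
  simp only [e] at hI
  have hc : ContinuousOn (fun s => -(cos α * γ s i 1)) (Set.Icc a b) :=
    ((h.cont_entry i 1).const_smul (cos α)).neg
  have hc' := hc.mono Set.Ioo_subset_Icc_self
  have := intervalIntegral.integral_hasDerivAt_right hI
    (hc'.stronglyMeasurableAtFilter isOpen_Ioo _ ht) (hc'.continuousAt (isOpen_Ioo.mem_nhds ht))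
  refine (this.const_add (γ a i 0)).congr_of_eventuallyEq ?_
  filter_upwards [isOpen_Ioo.mem_nhds ht] with s hs
  rw [h.hode s (Set.Ioo_subset_Icc_self hs) i 0]
  simp only [e]

lemma sign_const {f : ℝ → ℝ} {p q : ℝ} (hf : ContinuousOn f (Set.Ioo p q))
    (h0 : ∀ t ∈ Set.Ioo p q, f t ≠ 0) :
    (∀ t ∈ Set.Ioo p q, 0 < f t) ∨ (∀ t ∈ Set.Ioo p q, f t < 0) := by
  by_contra! hcon
  obtain ⟨⟨x, hx, hx0⟩, y, hy, hy0⟩ := hcon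
  obtain ⟨z, hz, hz0⟩ := isPreconnected_Ioo.intermediate_value hx hy hf ⟨hx0, hy0⟩
  exact h0 z hz hz0

lemma ae_transversal {f f' : ℝ → ℝ} {p q : ℝ}
    (hf : ∀ t ∈ Set.Ioo p q, HasDerivAt f (f' t) t) :
    ∀ᵐ t, t ∈ Set.Ioo p q → f t = 0 → f' t = 0 := by
  have hc := countable_setOfPred_isolated_right_within (s := {t : ℝ | f t = 0})
  have : ∀ᵐ t, t ∉ {x | x ∈ {t : ℝ | f t = 0} ∧ 𝓝[{t : ℝ | f t = 0} ∩ Set.Ioi x] x = ⊥} := by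
    rw [ae_iff]; simpa using hc.measure_zero volume
  filter_upwards [this] with t ht hm h0
  by_contra hne
  apply ht
  refine ⟨h0, ?_⟩
  have h1 := (hf t hm).eventually_ne (c := 0) hne
  rw [← Filter.empty_mem_iff_bot]
  have h2 : {z | f z ≠ 0} ∈ 𝓝[{t : ℝ | f t = 0} ∩ Set.Ioi t] t := by
    refine nhdsWithin_mono t ?_ h1
    intro z hz
    exact ne_of_gt hz.2
  have h3 : {t : ℝ | f t = 0} ∩ Set.Ioi t ∈ 𝓝[{t : ℝ | f t = 0} ∩ Set.Ioi t] t :=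
    self_mem_nhdsWithin
  filter_upwards [h2, h3] with z hz1 hz2
  exact hz1 hz2.1

lemma abs_hasDerivAt_zero {f : ℝ → ℝ} {t : ℝ} (hf : HasDerivAt f 0 t) (h0 : f t = 0) :
    HasDerivAt (fun s => |f s|) 0 t := by
  rw [hasDerivAt_iff_isLittleO] at hf ⊢
  simp only [h0, sub_zero, smul_zero, abs_zero] at hf ⊢
  exact hf.abs_left

lemma forward_lemma {α a b : ℝ} {γ : ℝ → Matrix (Fin 3) (Fin 3) ℝ} {u : ℝ → ℝ}
    (hα : α ∈ Set.Ioo 0 (π / 2)) (h : TimeOptimal α a b γ u) {d₀ : ℝ} (had : a < d₀)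
    (hd0 : d₀ ≤ b) (hu : ∀ᵐ t, t ∈ Set.Ioo a d₀ → u t = 0) :
    ∃ d ε : ℝ, d₀ ≤ d ∧ d ≤ b ∧ (ε = 1 ∨ ε = -1) ∧ (∀ᵐ t, t ∈ Set.Ioo a d → u t = 0) ∧
      (∀ᵐ t, t ∈ Set.Ioo d b → u t = ε) := by
  have hcα : 0 < cos α := cos_pos_of_mem_Ioo ⟨by linarith [hα.1, pi_pos], hα.2⟩
  have hsα : 0 < sin α := sin_pos_of_pos_of_lt_pi hα.1 (by linarith [hα.2, pi_pos])
  have hmax := max_condition hα h had hd0 hu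
  have h' := h.1.restrict had.le hd0 le_rfl
  have Sd : SOThree (γ d₀) := h'.so3 ⟨le_rfl, hd0⟩
  obtain ⟨m, hm⟩ : ∃ m : Fin 3 → ℝ → ℝ, ∀ k t, m k t = ((γ t).transpose * γ d₀) k 2 :=
    ⟨fun k t => ((γ t).transpose * γ d₀) k 2, fun _ _ => rfl⟩
  have hm' : ∀ k, m k = fun t => ∑ i, γ t i k * γ d₀ i 2 := by
    intro k; funext t; rw [hm]; simp [Matrix.mul_apply]
  simp only [← hm] at hmax
  -- continuity, absolute continuity
  have hmc : ∀ k, ContinuousOn (m k) (Set.Icc d₀ b) := by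
    intro k; rw [hm' k]
    exact continuousOn_finsetSum _ fun i _ => (h'.cont_entry i k).mul_const _
  have hmac : ∀ k, AbsolutelyContinuousOnInterval (m k) d₀ b := by
    intro k; rw [hm' k]
    simp only [Fin.sum_univ_three]
    have := ((((h'.ac 0 k).const_mul (γ d₀ 0 2)).fun_add ((h'.ac 1 k).const_mul (γ d₀ 1 2))).fun_add
      ((h'.ac 2 k).const_mul (γ d₀ 2 2)))
    simpa only [mul_comm] using this
  -- unit norm
  have hnorm : ∀ t ∈ Set.Icc d₀ b, m 0 t ^ 2 + m 1 t ^ 2 + m 2 t ^ 2 = 1 := by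
    intro t ht
    have S := ((h'.so3 ht).transpose.mul Sd).transpose_mul
    have := congrFun (congrFun S 2) 2
    rw [Matrix.mul_apply] at this
    simp only [Fin.sum_univ_three, Matrix.transpose_apply, Matrix.one_apply_eq, ← hm] at this
    linarith
  have hm0 : ∀ k, m k d₀ = (1 : Matrix (Fin 3) (Fin 3) ℝ) k 2 := by
    intro k; rw [hm, Sd.transpose_mul]
  -- derivatives
  have hd_m0 : ∀ t ∈ Set.Ioo d₀ b, HasDerivAt (m 0) (-(cos α * m 1 t)) t := by
    intro t ht
    rw [hm' 0, hm' 1]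
    have := HasDerivAt.fun_sum (u := Finset.univ)
      fun (i : Fin 3) _ => (h'.col0_hasDerivAt ht i).mul_const (γ d₀ i 2)
    refine this.congr_deriv ?_
    rw [Finset.mul_sum, ← Finset.sum_neg_distrib]
    exact Finset.sum_congr rfl fun i _ => by ring
  have hd_m : ∀ᵐ t, t ∈ Set.Ioo d₀ b →
      HasDerivAt (m 1) (cos α * m 0 t - u t * sin α * m 2 t) t ∧
      HasDerivAt (m 2) (u t * sin α * m 1 t) t := by
    filter_upwards [h'.ae_hasDerivAt] with t ht hmem
    constructor
    · rw [hm' 1, hm' 0, hm' 2]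
      have := HasDerivAt.fun_sum (u := Finset.univ)
        fun (i : Fin 3) _ => (ht hmem i 1).mul_const (γ d₀ i 2)
      refine this.congr_deriv ?_
      simp [Matrix.mul_apply, Fin.sum_univ_three, fM, gM]
      ring
    · rw [hm' 1, hm' 2]
      have := HasDerivAt.fun_sum (u := Finset.univ)
        fun (i : Fin 3) _ => (ht hmem i 2).mul_const (γ d₀ i 2)
      refine this.congr_deriv ?_
      simp [Matrix.mul_apply, Fin.sum_univ_three, fM, gM]
      ring
  -- sign rule
  have hsign : ∀ᵐ t, t ∈ Set.Ioo d₀ b → (0 < m 0 t → u t = 1) ∧ (m 0 t < 0 → u t = -1) := by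
    filter_upwards [hmax] with t ht hmem
    have hb := abs_le.mp (h'.hubound t (Set.Ioo_subset_Icc_self hmem))
    constructor
    · intro hp
      have := ht hmem 1 (Or.inl rfl)
      nlinarith
    · intro hp
      have := ht hmem (-1) (Or.inr rfl)
      nlinarith
  -- the conserved quantity
  have hN : ∀ t ∈ Set.Icc d₀ b, cos α * m 2 t + sin α * |m 0 t| = cos α := by
    have hac : AbsolutelyContinuousOnInterval (fun t => cos α * m 2 t + sin α * |m 0 t|) d₀ b := by
      have h1 : AbsolutelyContinuousOnInterval (fun t => |m 0 t|) d₀ b :=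
        ac_of_dist_le (hmac 0) fun x _ y _ => by
          rw [Real.dist_eq, Real.dist_eq]; exact abs_abs_sub_abs_le _ _
      exact ((hmac 2).const_mul _).fun_add (h1.const_mul _)
    have hder : ∀ᵐ t, t ∈ Set.uIcc d₀ b →
        HasDerivAt (fun t => cos α * m 2 t + sin α * |m 0 t|) 0 t := by
      have e1 : ∀ᵐ t : ℝ, t ≠ d₀ := by simp [ae_iff]
      have e2 : ∀ᵐ t : ℝ, t ≠ b := by simp [ae_iff]
      filter_upwards [e1, e2, hsign, hd_m, ae_transversal hd_m0] with t ht1 ht2 hs hd htr hmem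
      rw [Set.uIcc_of_le hd0] at hmem
      have hI : t ∈ Set.Ioo d₀ b :=
        ⟨lt_of_le_of_ne hmem.1 (Ne.symm ht1), lt_of_le_of_ne hmem.2 ht2⟩
      have d2 := (hd hI).2
      have d0 := hd_m0 t hI
      rcases lt_trichotomy (m 0 t) 0 with hlt | heq | hgt
      · have hut := (hs hI).2 hlt
        have : HasDerivAt (fun s => |m 0 s|) (-(-(cos α * m 1 t))) t := by
          refine d0.neg.congr_of_eventuallyEq ?_
          filter_upwards [d0.continuousAt.eventually_lt_const hlt] with s hs
          simp [abs_of_neg hs]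
        refine ((d2.const_mul (cos α)).add (this.const_mul (sin α))).congr_deriv ?_
        rw [hut]; ring
      · have hz := htr hI heq
        have hz1 : m 1 t = 0 := by
          have : cos α * m 1 t = 0 := by linarith
          exact (mul_eq_zero.mp this).resolve_left hcα.ne'
        rw [hz] at d0
        refine ((d2.const_mul (cos α)).add
          ((abs_hasDerivAt_zero d0 heq).const_mul (sin α))).congr_deriv ?_
        rw [hz1]; ring
      · have hut := (hs hI).1 hgt
        have : HasDerivAt (fun s => |m 0 s|) (-(cos α * m 1 t)) t := by
          refine d0.congr_of_eventuallyEq ?_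
          filter_upwards [d0.continuousAt.eventually_const_lt hgt] with s hs
          simp [abs_of_pos hs]
        refine ((d2.const_mul (cos α)).add (this.const_mul (sin α))).congr_deriv ?_
        rw [hut]; ring
    obtain ⟨C, hC⟩ := hac.const_of_ae_hasDerivAt_zero hder
    rw [Set.uIcc_of_le hd0] at hC
    intro t ht
    rw [hC t ht, ← hC d₀ ⟨le_rfl, hd0⟩, hm0, hm0]
    simp
  have hZ : ∀ t ∈ Set.Icc d₀ b, m 0 t = 0 → m 2 t = 1 ∧ m 1 t = 0 := by
    intro t ht h0
    have h1 := hN t ht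
    have h2 := hnorm t ht
    rw [h0] at h1 h2
    have h3 : m 2 t = 1 := by
      apply mul_left_cancel₀ hcα.ne'
      simpa using h1
    rw [h3] at h2
    refine ⟨h3, ?_⟩
    have : m 1 t ^ 2 = 0 := by linarith
    exact pow_eq_zero_iff two_ne_zero |>.mp this
  -- on a sign-constant interval the control is constant
  have hbang : ∀ p q, d₀ ≤ p → q ≤ b → (∀ t ∈ Set.Ioo p q, m 0 t ≠ 0) →
      ∃ ε : ℝ, (ε = 1 ∨ ε = -1) ∧ ∀ᵐ t, t ∈ Set.Ioo p q → u t = ε := by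
    intro p q hp hq hne
    have hsub : Set.Ioo p q ⊆ Set.Ioo d₀ b := Set.Ioo_subset_Ioo hp hq
    rcases sign_const ((hmc 0).mono (hsub.trans Set.Ioo_subset_Icc_self)) hne with hs | hs
    · refine ⟨1, Or.inl rfl, ?_⟩
      filter_upwards [hsign] with t ht hI using (ht (hsub hI)).1 (hs t hI)
    · refine ⟨-1, Or.inr rfl, ?_⟩
      filter_upwards [hsign] with t ht hI using (ht (hsub hI)).2 (hs t hI)
  -- two zeros cannot bound a bang arc
  have hnotwo : ∀ p q, d₀ ≤ p → p < q → q ≤ b → m 0 p = 0 → m 0 q = 0 →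
      (∀ t ∈ Set.Ioo p q, m 0 t ≠ 0) → False := by
    intro p q hp hpq hq hp0 hq0 hne
    obtain ⟨ε, hε, hu'⟩ := hbang p q hp hq hne
    have hcε : cos (ε * α) = cos α := by rcases hε with h | h <;> simp [h]
    have hsε : sin (ε * α) = ε * sin α := by rcases hε with h | h <;> simp [h]
    have harc := h'.eq_arc (v := ε) (ω := 1) (β := ε * α) hp hq hu' (by rw [one_mul, hcε])
      (by rw [one_mul, hsε]) q ⟨hpq.le, le_rfl⟩
    obtain ⟨z2, z1⟩ := hZ p ⟨hp, hpq.le.trans hq⟩ hp0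
    have hval : m 0 q = (1 - cos (1 * (q - p))) * cos α * (ε * sin α) := by
      have e : m 0 q = Rm (ε * α) (1 * (q - p)) 0 0 * m 0 p +
          Rm (ε * α) (1 * (q - p)) 1 0 * m 1 p + Rm (ε * α) (1 * (q - p)) 2 0 * m 2 p := by
        rw [hm, harc, Matrix.transpose_mul, Matrix.mul_assoc, Matrix.mul_apply, Fin.sum_univ_three,
          ← hm, ← hm, ← hm]
        rfl
      rw [e, hp0, z1, z2]
      simp [Rm, hcε, hsε]
    rw [hq0] at hval
    have hε0 : ε ≠ 0 := by rcases hε with h | h <;> simp [h]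
    have hcos : cos (1 * (q - p)) = 1 := by
      have h1 := hval.symm
      have h2 : cos α * (ε * sin α) ≠ 0 := mul_ne_zero hcα.ne' (mul_ne_zero hε0 hsα.ne')
      rw [mul_assoc] at h1
      have := (mul_eq_zero.mp h1).resolve_right h2
      linarith
    rw [Rm_two_pi_mul _ hcos, Matrix.mul_one] at harc
    exact h.ne (had.le.trans hp) hpq hq harc.symm
  -- the last zero
  have hclosed : ∀ x y, d₀ ≤ x → y ≤ b → IsCompact {t | t ∈ Set.Icc x y ∧ m 0 t = 0} := by
    intro x y hx hy
    have := ((hmc 0).mono (Set.Icc_subset_Icc hx hy)).preimage_isClosed_of_isClosed isClosed_Icc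
      (isClosed_singleton (x := (0:ℝ)))
    exact isCompact_Icc.of_isClosed_subset this (fun t ht => ht.1)
  have hmd0 : m 0 d₀ = 0 := by rw [hm0]; simp
  obtain ⟨d, ⟨hdI, hdz⟩, hdmax⟩ := (hclosed d₀ b le_rfl le_rfl).exists_isGreatest
    ⟨d₀, ⟨le_rfl, hd0⟩, hmd0⟩
  have hzero : ∀ t ∈ Set.Icc d₀ d, m 0 t = 0 := by
    intro t ht
    by_contra hne
    obtain ⟨p, ⟨hpI, hpz⟩, hpmax⟩ := (hclosed d₀ t le_rfl (ht.2.trans hdI.2)).exists_isGreatest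
      ⟨d₀, ⟨le_rfl, ht.1⟩, hmd0⟩
    obtain ⟨q, ⟨hqI, hqz⟩, hqmin⟩ := (hclosed t d ht.1 hdI.2).exists_isLeast
      ⟨d, ⟨ht.2, le_rfl⟩, hdz⟩
    have hpt : p < t := lt_of_le_of_ne hpI.2 (fun e => hne (e ▸ hpz))
    have htq : t < q := lt_of_le_of_ne hqI.1 (fun e => hne (e ▸ hqz))
    refine hnotwo p q hpI.1 (hpt.trans htq) (hqI.2.trans hdI.2) hpz hqz fun s hs hs0 => ?_
    rcases le_total s t with hst | hst
    · exact absurd (hpmax ⟨⟨hpI.1.trans hs.1.le, hst⟩, hs0⟩) (not_le.mpr hs.1)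
    · exact absurd (hqmin ⟨⟨hst, hs.2.le.trans hqI.2⟩, hs0⟩) (not_le.mpr hs.2)
  obtain ⟨ε, hε, hu'⟩ := hbang d b hdI.1 le_rfl fun t ht h0 =>
    absurd (hdmax ⟨⟨hdI.1.trans ht.1.le, ht.2.le⟩, h0⟩) (not_le.mpr ht.1)
  refine ⟨d, ε, hdI.1, hdI.2, hε, ?_, hu'⟩
  have e1 : ∀ᵐ t : ℝ, t ≠ d₀ := by simp [ae_iff]
  filter_upwards [hu, e1, hd_m] with t ht hne hd hI
  rcases lt_or_gt_of_ne hne with hlt | hgt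
  · exact ht ⟨hI.1, hlt⟩
  · have hI' : t ∈ Set.Ioo d₀ d := ⟨hgt, hI.2⟩
    have hder := (hd ⟨hgt, hI.2.trans_le hdI.2⟩).1
    have hsub : ∀ s ∈ Set.Ioo d₀ d, m 0 s = 0 ∧ m 1 s = 0 ∧ m 2 s = 1 := by
      intro s hs
      have h0 := hzero s (Set.Ioo_subset_Icc_self hs)
      have := hZ s ⟨hs.1.le, hs.2.le.trans hdI.2⟩ h0
      exact ⟨h0, this.2, this.1⟩
    have hder0 : HasDerivAt (m 1) 0 t := by
      refine (hasDerivAt_const t (0:ℝ)).congr_of_eventuallyEq ?_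
      filter_upwards [isOpen_Ioo.mem_nhds hI'] with s hs using (hsub s hs).2.1
    have := hder.unique hder0
    rw [(hsub t hI').1, (hsub t hI').2.2] at this
    have : u t * sin α = 0 := by linarith
    exact (mul_eq_zero.mp this).resolve_right hsα.ne'

/-! ### Assembly -/

lemma ae_Ioo_false {p q : ℝ} (hpq : p < q) (h : ∀ᵐ t : ℝ, t ∈ Set.Ioo p q → False) : False := by
  have h1 : volume (Set.Ioo p q) = 0 := by
    rw [ae_iff] at h
    have e : {t : ℝ | ¬ (t ∈ Set.Ioo p q → False)} = Set.Ioo p q := by ext t; simp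
    rwa [e] at h
  rw [Real.volume_Ioo] at h1
  simp at h1
  linarith

lemma ae_neg {P : ℝ → Prop} (h : ∀ᵐ t : ℝ, P t) : ∀ᵐ t : ℝ, P (-t) :=
  (Measure.measurePreserving_neg (volume : Measure ℝ)).quasiMeasurePreserving.ae h

lemma ae_restrict_of_Ioo {P : ℝ → Prop} {p q : ℝ} (h : ∀ᵐ t : ℝ, t ∈ Set.Ioo p q → P t) :
    ∀ᵐ t ∂(volume.restrict (Set.Icc p q)), P t := by
  rw [← restrict_Ioo_eq_restrict_Icc, ae_restrict_iff' measurableSet_Ioo]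
  exact h

lemma TimeOptimal.of_same {α a b : ℝ} {γ γ₂ : ℝ → Matrix (Fin 3) (Fin 3) ℝ} {u u₂ : ℝ → ℝ}
    (h : TimeOptimal α a b γ u) (h₂ : AdmissiblePair α a b γ₂ u₂) (ha : γ₂ a = γ a)
    (hb : γ₂ b = γ b) : TimeOptimal α a b γ₂ u₂ :=
  ⟨h₂, fun a' b' γ' u' hγ' h0 hT => h.2 a' b' γ' u' hγ' (h0.trans ha) (hT.trans hb)⟩

lemma singular_length {α a b : ℝ} {γ : ℝ → Matrix (Fin 3) (Fin 3) ℝ} {u : ℝ → ℝ}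
    (hα : α ∈ Set.Ioo 0 (π / 2)) (h : TimeOptimal α a b γ u) {d ε : ℝ} (had : a ≤ d)
    (hdb : d < b) (hu : ∀ᵐ t, t ∈ Set.Ioo a d → u t = 0) (hε : ε = 1 ∨ ε = -1)
    (hu' : ∀ᵐ t, t ∈ Set.Ioo d b → u t = ε) : d - a ≤ π / cos α := by
  by_contra! hlt
  have hcα : 0 < cos α := cos_pos_of_mem_Ioo ⟨by linarith [hα.1, pi_pos], hα.2⟩
  obtain ⟨r, hr⟩ : ∃ r, r = π / cos α := ⟨_, rfl⟩
  rw [← hr] at hlt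
  have hr0 : 0 < r := by rw [hr]; have := pi_pos; positivity
  have hcr : cos α * r = π := by rw [hr]; field_simp
  have hcε : cos (ε * α) = cos α := by rcases hε with h | h <;> simp [h]
  have hsε : sin (ε * α) = ε * sin α := by rcases hε with h | h <;> simp [h]
  have S0 : SOThree (γ a) := h.1.so3 ⟨le_rfl, h.1.hab⟩
  have P1 := AdmissiblePair.arc (α := α) (v := 0) (ω := cos α) (β := 0) (p := a) (q := d - r)
    (by linarith) (by simp) (by simp) (by simp) S0
  have S1 := P1.so3 (t := d - r) ⟨by linarith, le_rfl⟩
  have P2 := AdmissiblePair.arc (α := α) (v := -ε) (ω := 1) (β := -(ε * α)) (p := d - r)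
    (q := b - r) (by linarith) (by rcases hε with h | h <;> simp [h])
    (by rw [cos_neg, hcε, one_mul]) (by rw [sin_neg, hsε]; ring) S1
  have S2 := P2.so3 (t := b - r) ⟨by linarith, le_rfl⟩
  have P3 := AdmissiblePair.arc (α := α) (v := 0) (ω := cos α) (β := 0) (p := b - r) (q := b)
    (by linarith) (by simp) (by simp) (by simp) S2
  have P12 := P1.concat P2 (by simp [Rm_zero])
  have P := P12.concat P3 (by
    have : ¬ b - r ≤ d - r := by linarith
    simp only [this, if_false]
    simp [Rm_zero])
  have hend : γ b = γ a * Rm 0 (cos α * (d - r - a)) * Rm (-(ε * α)) (1 * (b - r - (d - r))) *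
      Rm 0 (cos α * (b - (b - r))) := by
    have e1 := h.1.eq_arc (v := 0) (ω := cos α) (β := 0) le_rfl hdb.le hu (by simp) (by simp) d
      ⟨had, le_rfl⟩
    have e2 := h.1.eq_arc (v := ε) (ω := 1) (β := ε * α) had le_rfl hu' (by rw [hcε, one_mul])
      (by rw [hsε, one_mul]) b ⟨hdb.le, le_rfl⟩
    have e3 : cos α * (b - (b - r)) = π := by rw [← hcr]; ring
    have e4 : cos α * (d - a) = cos α * (d - r - a) + π := by rw [← hcr]; ring
    have e5 : 1 * (b - r - (d - r)) = 1 * (b - d) := by ring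
    rw [e2, e1, e3, e4, e5, Rm_zero_add, Matrix.mul_assoc _ (Rm (-(ε * α)) _), Rm_pi_comm]
    simp only [Matrix.mul_assoc]
  have hP := h.of_same P
    (by
      have e1 : a ≤ b - r := by linarith
      have e2 : a ≤ d - r := by linarith
      simp only [e1, e2, if_true]
      simp [Rm_zero])
    (by
      rw [hend]
      have e1 : ¬ b ≤ b - r := by linarith
      simp only [e1, if_false])
  obtain ⟨d', ε'', hd'1, hd'2, hε'', hw1, hw2⟩ := forward_lemma hα hP (d₀ := d - r) (by linarith)
    (by linarith) (Eventually.of_forall fun t ht => by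
      have e1 : t ≤ b - r := by linarith [ht.2]
      have e2 : t ≤ d - r := ht.2.le
      simp only [e1, e2, if_true])
  rcases lt_or_eq_of_le hd'2 with hlt' | heq
  · refine ae_Ioo_false (p := max d' (b - r)) (q := b) (max_lt hlt' (by linarith)) ?_
    filter_upwards [hw2] with t ht hI
    have h1 := ht ⟨(le_max_left _ _).trans_lt hI.1, hI.2⟩
    have e1 : ¬ t ≤ b - r := not_le.mpr ((le_max_right _ _).trans_lt hI.1)
    simp only [e1, if_false] at h1
    rcases hε'' with h | h <;> rw [h] at h1 <;> norm_num at h1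
  · refine ae_Ioo_false (p := d - r) (q := b - r) (by linarith) ?_
    filter_upwards [hw1] with t ht hI
    have h1 := ht ⟨by linarith [hI.1], by rw [heq]; linarith [hI.2]⟩
    have e1 : t ≤ b - r := hI.2.le
    have e2 : ¬ t ≤ d - r := not_le.mpr hI.1
    simp only [e1, e2, if_true, if_false] at h1
    rcases hε with h | h <;> rw [h] at h1 <;> norm_num at h1


/-- A time optimal trajectory containing a singular arc is of type `B_t S_s B_{t'}`,
with `s < 2π/cos α`, and `s ≤ π/cos α` if one of the bang arcs is nontrivial. -/
theorem singular_structure (α a b : ℝ) (γ : ℝ → Matrix (Fin 3) (Fin 3) ℝ) (u : ℝ → ℝ)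
    (hα : α ∈ Set.Ioo 0 (π / 2)) (hopt : TimeOptimal α a b γ u)
    (hsing : ∃ c₀ d₀ : ℝ, a ≤ c₀ ∧ c₀ < d₀ ∧ d₀ ≤ b ∧
      ∀ᵐ t ∂(volume.restrict (Set.Icc c₀ d₀)), u t = 0) :
    ∃ c d ε ε' : ℝ, a ≤ c ∧ c ≤ d ∧ d ≤ b ∧
      (ε = 1 ∨ ε = -1) ∧ (ε' = 1 ∨ ε' = -1) ∧
      (∀ᵐ t ∂(volume.restrict (Set.Icc a c)), u t = ε) ∧
      (∀ᵐ t ∂(volume.restrict (Set.Icc c d)), u t = 0) ∧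
      (∀ᵐ t ∂(volume.restrict (Set.Icc d b)), u t = ε') ∧
      d - c < 2 * π / Real.cos α ∧
      ((a < c ∨ d < b) → d - c ≤ π / Real.cos α) := by
  obtain ⟨c₀, d₀, hac, hcd, hdb, hu0⟩ := hsing
  have hcα : 0 < cos α := cos_pos_of_mem_Ioo ⟨by linarith [hα.1, pi_pos], hα.2⟩
  rw [ae_restrict_iff' measurableSet_Icc] at hu0
  obtain ⟨d, ε', hd1, hd2, hε', hud, hudb⟩ := forward_lemma hα
    (hopt.restrict hac (hcd.le.trans hdb) le_rfl) hcd hdb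
    (by filter_upwards [hu0] with t ht hI using ht (Set.Ioo_subset_Icc_self hI))
  have hrev := (hopt.restrict le_rfl ((hac.trans hcd.le).trans hd1) hd2).reverse
  obtain ⟨e, ε, he1, he2, hε, hue, huea⟩ := forward_lemma hα hrev (d₀ := -c₀) (by linarith)
    (by linarith) (by
      filter_upwards [ae_neg hud] with t ht hI
      exact ht ⟨by linarith [hI.2], by linarith [hI.1]⟩)
  have hcd' : -e < d := by linarith
  have hu1 : ∀ᵐ t, t ∈ Set.Ioo (-e) d → u t = 0 := by
    filter_upwards [ae_neg hue] with t ht hI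
    have := ht ⟨by linarith [hI.2], by linarith [hI.1]⟩
    simpa using this
  have hu2 : ∀ᵐ t, t ∈ Set.Ioo a (-e) → u t = ε := by
    filter_upwards [ae_neg huea] with t ht hI
    have := ht ⟨by linarith [hI.2], by linarith [hI.1]⟩
    simpa using this
  refine ⟨-e, d, ε, ε', by linarith, hcd'.le, hd2, hε, hε', ae_restrict_of_Ioo hu2,
    ae_restrict_of_Ioo hu1, ae_restrict_of_Ioo hudb, ?_, ?_⟩
  · by_contra! hle
    have hpos : 0 < 2 * π / cos α := by have := pi_pos; positivity
    have := hopt.1.eq_arc (v := 0) (ω := cos α) (β := 0) (by linarith) hd2 hu1 (by simp) (by simp)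
      (-e + 2 * π / cos α) ⟨by linarith, by linarith⟩
    have e1 : cos α * (-e + 2 * π / cos α - -e) = 2 * π := by field_simp; ring
    rw [e1, Rm_two_pi_mul 0 cos_two_pi, Matrix.mul_one] at this
    exact hopt.ne (by linarith) (by linarith) (by linarith) this.symm
  · rintro (hlt | hlt)
    · have := singular_length hα hrev (d := e) (ε := ε) (by linarith) (by linarith) hue hε huea
      linarith
    · exact singular_length hα (hopt.restrict (p := -e) (by linarith) (by linarith) le_rfl) hcd'.le
        hlt hu1 hε' hudb
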